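/- arXiv:1711.07409 — 2 statements merged into one kernel-verified Lean document; each statement's English description precedes it below -/
import Mathlib

section
/- For every TS-module M, the canonical map from the S-invariants M^S to the S-coinvariants M_S (the composition of the inclusion M^S ⊆ M with the quotient map M → M_S) is injective. -/
noncomputable section

open scoped Classical

namespace PSW

/-! ### The affine group `λ.b : x ↦ λ·x + b` over a field `K`. -/

@[ext]
structure Aff (K : Type*) [Field K] where
  t : Kˣ
  s : K

namespace Aff

variable {K : Type*} [Field K]

instance : Mul (Aff K) := ⟨fun g h => ⟨g.t * h.t, g.s + (g.t : K) * h.s⟩⟩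
instance : One (Aff K) := ⟨⟨1, 0⟩⟩
instance : Inv (Aff K) := ⟨fun g => ⟨g.t⁻¹, -(((g.t⁻¹ : Kˣ) : K) * g.s)⟩⟩

@[simp] lemma mul_t (g h : Aff K) : (g * h).t = g.t * h.t := rfl
@[simp] lemma mul_s (g h : Aff K) : (g * h).s = g.s + (g.t : K) * h.s := rfl
@[simp] lemma one_t : (1 : Aff K).t = 1 := rfl
@[simp] lemma one_s : (1 : Aff K).s = 0 := rfl
@[simp] lemma inv_t (g : Aff K) : (g⁻¹).t = g.t⁻¹ := rfl
@[simp] lemma inv_s (g : Aff K) : (g⁻¹).s = -(((g.t⁻¹ : Kˣ) : K) * g.s) := rfl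

instance : Group (Aff K) where
  mul_assoc a b c := by
    ext
    · simp [mul_assoc]
    · simp only [mul_s, mul_t, Units.val_mul]; ring
  one_mul a := by ext <;> simp
  mul_one a := by ext <;> simp
  inv_mul_cancel a := by
    ext
    · simp
    · simp

/-- The element `x_λ` of the group `TS`. -/
def xT (u : Kˣ) : Aff K := ⟨u, 0⟩

/-- The element `s_b` of the group `TS`. -/
def sS (b : K) : Aff K := ⟨1, b⟩

@[simp] lemma xT_t (u : Kˣ) : (xT u : Aff K).t = u := rfl
@[simp] lemma xT_s (u : Kˣ) : (xT u : Aff K).s = 0 := rfl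
@[simp] lemma sS_t (b : K) : (sS b : Aff K).t = 1 := rfl
@[simp] lemma sS_s (b : K) : (sS b : Aff K).s = b := rfl

/-- `T ≅ k^×` as a subgroup of `TS`. -/
def xTHom : Kˣ →* Aff K where
  toFun := xT
  map_one' := rfl
  map_mul' u v := by ext <;> simp [xT]

@[simp] lemma xTHom_apply (u : Kˣ) : (xTHom u : Aff K) = xT u := rfl

lemma mul_sS (g : Aff K) (b : K) : g * sS b = sS ((g.t : K) * b) * g := by
  ext
  · simp
  · simp [add_comm]

lemma sS_mul (b : K) (g : Aff K) : sS b * g = g * sS (((g.t⁻¹ : Kˣ) : K) * b) := by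
  ext
  · simp
  · simp [Units.mul_inv_cancel_left, add_comm]

lemma aff_decomp (g : Aff K) : g = xT g.t * sS (((g.t⁻¹ : Kˣ) : K) * g.s) := by
  ext
  · simp
  · simp [Units.mul_inv_cancel_left]

instance [TopologicalSpace K] : TopologicalSpace (Aff K) :=
  TopologicalSpace.induced (fun g : Aff K => ((g.t, g.s) : Kˣ × K)) inferInstance

end Aff

/-! ### Generalities on representations of a monoid on complex vector spaces. -/

namespace GRep

variable {G : Type*} [Monoid G]

section MonoidModules

variable {V W : Type*} [AddCommMonoid V] [Module ℂ V] [AddCommMonoid W] [Module ℂ W]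

/-- A submodule invariant under the representation. -/
def Invariant (ρ : Representation ℂ G V) (U : Submodule ℂ V) : Prop :=
  ∀ (g : G) (v : V), v ∈ U → ρ g v ∈ U

/-- Equivariance of a linear map with respect to two representations. -/
def Equivariant (ρ : Representation ℂ G V) (σ : Representation ℂ G W) (f : V →ₗ[ℂ] W) : Prop :=
  ∀ (g : G) (v : V), f (ρ g v) = σ g (f v)

/-- Isomorphism of representations. -/
def Iso (ρ : Representation ℂ G V) (σ : Representation ℂ G W) : Prop :=
  ∃ e : V ≃ₗ[ℂ] W, ∀ (g : G) (v : V), e (ρ g v) = σ g (e v)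

/-- Irreducibility. -/
def Irred (ρ : Representation ℂ G V) : Prop :=
  Nontrivial V ∧ ∀ U : Submodule ℂ V, Invariant ρ U → U = ⊥ ∨ U = ⊤

/-- Subrepresentation on an invariant submodule. -/
def sub (ρ : Representation ℂ G V) {U : Submodule ℂ V} (hU : Invariant ρ U) :
    Representation ℂ G ↥U where
  toFun g := (ρ g).restrict fun v hv => hU g v hv
  map_one' := by
    apply LinearMap.ext; intro v; apply Subtype.ext
    simp [LinearMap.restrict_apply]
  map_mul' g h := by
    apply LinearMap.ext; intro v; apply Subtype.ext
    simp [LinearMap.restrict_apply]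

@[simp] lemma sub_apply (ρ : Representation ℂ G V) {U : Submodule ℂ V} (hU : Invariant ρ U)
    (g : G) (v : ↥U) : ((sub ρ hU g v : ↥U) : V) = ρ g (v : V) := rfl

lemma ker_invariant (ρ : Representation ℂ G V) (σ : Representation ℂ G W)
    (f : V →ₗ[ℂ] W) (hf : Equivariant ρ σ f) : Invariant ρ (LinearMap.ker f) := by
  intro g v hv
  rw [LinearMap.mem_ker] at hv ⊢
  rw [hf g v, hv, map_zero]

lemma range_invariant (ρ : Representation ℂ G V) (σ : Representation ℂ G W)
    (f : V →ₗ[ℂ] W) (hf : Equivariant ρ σ f) : Invariant σ (LinearMap.range f) := by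
  rintro g w ⟨v, rfl⟩
  exact ⟨ρ g v, hf g v⟩

lemma map_invariant (ρ : Representation ℂ G V) (σ : Representation ℂ G W)
    (f : V →ₗ[ℂ] W) (hf : Equivariant ρ σ f) (U : Submodule ℂ V) (hU : Invariant ρ U) :
    Invariant σ (U.map f) := by
  rintro g w ⟨v, hv, rfl⟩
  exact ⟨ρ g v, hU g v hv, hf g v⟩

end MonoidModules

section GroupModules

variable {V W : Type*} [AddCommGroup V] [Module ℂ V] [AddCommGroup W] [Module ℂ W]

/-- Quotient representation. -/
def quot (ρ : Representation ℂ G V) (U : Submodule ℂ V) (hU : Invariant ρ U) :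
    Representation ℂ G (V ⧸ U) where
  toFun g := U.mapQ U (ρ g) fun v hv => hU g v hv
  map_one' := by
    apply LinearMap.ext; intro x
    obtain ⟨v, rfl⟩ := Submodule.Quotient.mk_surjective U x
    simp [Submodule.mapQ_apply]
  map_mul' g h := by
    apply LinearMap.ext; intro x
    obtain ⟨v, rfl⟩ := Submodule.Quotient.mk_surjective U x
    simp [Submodule.mapQ_apply]

@[simp] lemma quot_apply (ρ : Representation ℂ G V) (U : Submodule ℂ V) (hU : Invariant ρ U)
    (g : G) (v : V) :
    quot ρ U hU g (Submodule.Quotient.mk v) = Submodule.Quotient.mk (ρ g v) := rfl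

/-- Subquotient representation on `B/A`. -/
def subquot (ρ : Representation ℂ G V) {A B : Submodule ℂ V}
    (hA : Invariant ρ A) (hB : Invariant ρ B) :
    Representation ℂ G (↥B ⧸ A.comap B.subtype) :=
  quot (sub ρ hB) (A.comap B.subtype) fun g v hv => hA g v.1 hv

lemma mkQ_equivariant (ρ : Representation ℂ G V) (U : Submodule ℂ V) (hU : Invariant ρ U) :
    Equivariant ρ (quot ρ U hU) U.mkQ := by
  intro g v
  show Submodule.Quotient.mk (ρ g v) = quot ρ U hU g (Submodule.Quotient.mk v)
  rw [quot_apply]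

end GroupModules

end GRep

/-! ### TS-modules: representations of the affine group. -/

/-- A `TS`-module structure on `V` is a representation of the group `TS ≅ Gl_a(1)`. -/
abbrev Rep (K : Type*) [Field K] (V : Type*) [AddCommGroup V] [Module ℂ V] :=
  Representation ℂ (Aff K) V

section RepDefs

open Aff

variable {K : Type*} [Field K]
variable {V W : Type*} [AddCommGroup V] [Module ℂ V] [AddCommGroup W] [Module ℂ W]

/-- Smoothness: every vector has open stabilizer. -/
def IsSmoothRep [TopologicalSpace K] (ρ : Rep K V) : Prop :=
  ∀ v : V, IsOpen {g : Aff K | ρ g v = v}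

/-- Smoothness of a `T`-module, i.e. of a representation of `T ≅ k^×`. -/
def TIsSmooth {X : Type*} [AddCommMonoid X] [Module ℂ X] [TopologicalSpace K]
    (τ : Representation ℂ Kˣ X) : Prop :=
  ∀ x : X, IsOpen {u : Kˣ | τ u x = x}

/-- Smooth character of `T ≅ k^×` (open kernel, equivalently locally constant). -/
def SmoothMulChar [TopologicalSpace K] (χ : Kˣ →* ℂˣ) : Prop :=
  IsOpen {u : Kˣ | χ u = 1}

/-- The space `V^S` of `S`-invariants. -/
def sInv (ρ : Rep K V) : Submodule ℂ V where
  carrier := {v | ∀ b : K, ρ (sS b) v = v}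
  zero_mem' := fun b => map_zero _
  add_mem' {a b} ha hb := fun c => by rw [map_add, ha c, hb c]
  smul_mem' c v hv := fun b => by rw [map_smul, hv b]

@[simp] lemma mem_sInv (ρ : Rep K V) (v : V) :
    v ∈ sInv ρ ↔ ∀ b : K, ρ (sS b) v = v := Iff.rfl

/-- The `χ`-eigenspace `X^{T,χ}` of a `T`-module. -/
def tEigenT {X : Type*} [AddCommMonoid X] [Module ℂ X]
    (τ : Representation ℂ Kˣ X) (χ : Kˣ →* ℂˣ) : Submodule ℂ X where
  carrier := {x | ∀ u : Kˣ, τ u x = (χ u : ℂ) • x}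
  zero_mem' := fun u => by simp
  add_mem' {a b} ha hb := fun u => by rw [map_add, ha u, hb u, smul_add]
  smul_mem' c x hx := fun u => by rw [map_smul, hx u]; exact smul_comm c ((χ u : ℂ)) x

@[simp] lemma mem_tEigenT {X : Type*} [AddCommMonoid X] [Module ℂ X]
    (τ : Representation ℂ Kˣ X) (χ : Kˣ →* ℂˣ) (x : X) :
    x ∈ tEigenT τ χ ↔ ∀ u : Kˣ, τ u x = (χ u : ℂ) • x := Iff.rfl

/-- The `χ`-eigenspace `V^{T,χ}` of a `TS`-module. -/
def tEigen (ρ : Rep K V) (χ : Kˣ →* ℂˣ) : Submodule ℂ V := tEigenT (ρ.comp xTHom) χ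

/-- The kernel of the projection to the `S`-coinvariants `V_S`. -/
def sCoinvKer (ρ : Rep K V) : Submodule ℂ V :=
  Submodule.span ℂ {w : V | ∃ (b : K) (v : V), w = ρ (sS b) v - v}

/-- The kernel of the projection to the twisted coinvariants `V_{S,ψ'}`. -/
def sTwistKer (ρ : Rep K V) (ψ' : AddChar K ℂ) : Submodule ℂ V :=
  Submodule.span ℂ {w : V | ∃ (b : K) (v : V), w = ρ (sS b) v - ψ' b • v}

/-- The kernel of the projection to the `χ`-coinvariants `X_{T,χ}` of a `T`-module. -/
def tTwistKerT {X : Type*} [AddCommGroup X] [Module ℂ X]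
    (τ : Representation ℂ Kˣ X) (χ : Kˣ →* ℂˣ) : Submodule ℂ X :=
  Submodule.span ℂ {w : X | ∃ (u : Kˣ) (x : X), w = τ u x - (χ u : ℂ) • x}

/-- The kernel of the projection to the `χ`-coinvariants `V_{T,χ}` of a `TS`-module. -/
def tTwistKer (ρ : Rep K V) (χ : Kˣ →* ℂˣ) : Submodule ℂ V := tTwistKerT (ρ.comp xTHom) χ

lemma sCoinvKer_invariant (ρ : Rep K V) : GRep.Invariant ρ (sCoinvKer ρ) := by
  intro g v hv
  have h : sCoinvKer ρ ≤ Submodule.comap (ρ g) (sCoinvKer ρ) := by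
    refine Submodule.span_le.2 ?_
    rintro w ⟨b, v', rfl⟩
    simp only [SetLike.mem_coe, Submodule.mem_comap, map_sub]
    have h1 : ρ g (ρ (sS b) v') = ρ (sS ((g.t : K) * b)) (ρ g v') := by
      rw [← Module.End.mul_apply, ← map_mul, mul_sS, map_mul, Module.End.mul_apply]
    rw [h1]
    exact Submodule.subset_span ⟨(g.t : K) * b, ρ g v', rfl⟩
  exact h hv

lemma sInv_invariant (ρ : Rep K V) : GRep.Invariant ρ (sInv ρ) := by
  intro g v hv
  rw [mem_sInv] at hv ⊢
  intro b
  have h1 : ρ (sS b) (ρ g v) = ρ g (ρ (sS (((g.t⁻¹ : Kˣ) : K) * b)) v) := by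
    rw [← Module.End.mul_apply, ← map_mul, sS_mul, map_mul, Module.End.mul_apply]
  rw [h1, hv _]

/-- The `S`-coinvariants `π₀(V) = V_S` as a `TS`-module (`S` acting trivially). -/
def piZeroRep (ρ : Rep K V) : Rep K (V ⧸ sCoinvKer ρ) :=
  GRep.quot ρ (sCoinvKer ρ) (sCoinvKer_invariant ρ)

/-- The `S`-coinvariants `π₀(V) = V_S` as a `T`-module. -/
def piZeroT (ρ : Rep K V) : Representation ℂ Kˣ (V ⧸ sCoinvKer ρ) :=
  (piZeroRep ρ).comp xTHom

/-- The `T`-module structure on `κ(V) = V^S`. -/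
def sInvT (ρ : Rep K V) : Representation ℂ Kˣ ↥(sInv ρ) :=
  (GRep.sub ρ (sInv_invariant ρ)).comp xTHom

/-- A `TS`-module is perfect if all its eigenspaces `V^{T,χ}` for smooth `χ` vanish. -/
def Perfect [TopologicalSpace K] (ρ : Rep K V) : Prop :=
  ∀ χ : Kˣ →* ℂˣ, SmoothMulChar χ → tEigen ρ χ = ⊥

/-- A finite-dimensional `T`-module is cyclic if each generalized eigenspace is a single
Jordan block; equivalently all eigenspaces `X^{T,χ}` have dimension at most one. -/
def TCyclic {X : Type*} [AddCommGroup X] [Module ℂ X]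
    (τ : Representation ℂ Kˣ X) : Prop :=
  ∀ χ : Kˣ →* ℂˣ, Module.finrank ℂ ↥(tEigenT τ χ) ≤ 1

lemma sCoinvKer_le_comap (ρ : Rep K V) (σ : Rep K W)
    (f : V →ₗ[ℂ] W) (hf : GRep.Equivariant ρ σ f) :
    sCoinvKer ρ ≤ (sCoinvKer σ).comap f := by
  refine Submodule.span_le.2 ?_
  rintro w ⟨b, v, rfl⟩
  simp only [SetLike.mem_coe, Submodule.mem_comap, map_sub]
  rw [hf]
  exact Submodule.subset_span ⟨b, f v, rfl⟩

/-- The map induced by an equivariant map on the `S`-coinvariants `π₀`. -/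
def piZeroMap (ρ : Rep K V) (σ : Rep K W) (f : V →ₗ[ℂ] W) (hf : GRep.Equivariant ρ σ f) :
    (V ⧸ sCoinvKer ρ) →ₗ[ℂ] (W ⧸ sCoinvKer σ) :=
  Submodule.mapQ _ _ f (sCoinvKer_le_comap ρ σ f hf)

lemma piZeroMap_equivariant (ρ : Rep K V) (σ : Rep K W) (f : V →ₗ[ℂ] W)
    (hf : GRep.Equivariant ρ σ f) :
    GRep.Equivariant (piZeroRep ρ) (piZeroRep σ) (piZeroMap ρ σ f hf) := by
  intro g x
  obtain ⟨v, rfl⟩ := Submodule.Quotient.mk_surjective _ x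
  show piZeroMap ρ σ f hf (piZeroRep ρ g (Submodule.Quotient.mk v))
      = piZeroRep σ g (piZeroMap ρ σ f hf (Submodule.Quotient.mk v))
  rw [show piZeroRep ρ g (Submodule.Quotient.mk v) = Submodule.Quotient.mk (ρ g v) from rfl]
  rw [show piZeroMap ρ σ f hf (Submodule.Quotient.mk v) = Submodule.Quotient.mk (f v) from rfl]
  rw [show piZeroMap ρ σ f hf (Submodule.Quotient.mk (ρ g v))
      = Submodule.Quotient.mk (f (ρ g v)) from rfl]
  rw [show piZeroRep σ g (Submodule.Quotient.mk (f v)) = Submodule.Quotient.mk (σ g (f v)) from rfl]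
  rw [hf]

lemma kappaImg_invariant (ρ : Rep K V) :
    GRep.Invariant (piZeroT ρ) ((sInv ρ).map (sCoinvKer ρ).mkQ) := by
  rintro u w ⟨v, hv, rfl⟩
  refine ⟨ρ (xT u) v, sInv_invariant ρ (xT u) v hv, ?_⟩
  rfl

end RepDefs

/-! ### Composition series and degree. -/

/-- A composition series for a `TS`-module, witnessing finite length: a maximal chain of
invariant submodules (the subquotients are then irreducible). -/
structure CompSeries {K : Type*} [Field K] {V : Type*} [AddCommGroup V] [Module ℂ V]
    (ρ : Rep K V) where
  n : ℕ
  W : ℕ → Submodule ℂ V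
  bot : W 0 = ⊥
  top : W n = ⊤
  inv : ∀ i, GRep.Invariant ρ (W i)
  lt : ∀ i < n, W i < W (i + 1)
  maximal : ∀ i < n, ∀ C : Submodule ℂ V, GRep.Invariant ρ C → W i ≤ C → C ≤ W (i + 1) →
    C = W i ∨ C = W (i + 1)

/-- The number of Jordan–Hölder constituents of a composition series isomorphic to a given
representation `σ` (applied with `σ = 𝕊`, this is the degree). -/
def CompSeries.deg {K : Type*} [Field K] {V : Type*} [AddCommGroup V] [Module ℂ V]
    {ρ : Rep K V} (c : CompSeries ρ) {W₀ : Type*} [AddCommMonoid W₀] [Module ℂ W₀]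
    (σ : Representation ℂ (Aff K) W₀) : ℕ :=
  (Finset.univ.filter fun i : Fin c.n =>
    GRep.Iso (GRep.subquot ρ (c.inv i.1) (c.inv (i.1 + 1))) σ).card

/-! ### Fiber products of a `T`-module with a `TS`-module over a `T`-module. -/

section Fiber

open Aff

variable {K : Type*} [Field K]
variable {X Y E : Type*} [AddCommGroup X] [Module ℂ X] [AddCommGroup Y] [Module ℂ Y]
  [AddCommGroup E] [Module ℂ E]

/-- The product `TS`-module `X × E` where `S` acts trivially on the `T`-module `X`. -/
def prodRepTE (τ : Representation ℂ Kˣ X) (ρ : Rep K E) : Rep K (X × E) where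
  toFun g := (τ g.t).prodMap (ρ g)
  map_one' := by
    apply LinearMap.ext; rintro ⟨x, v⟩
    simp
  map_mul' g h := by
    apply LinearMap.ext; rintro ⟨x, v⟩
    simp [map_mul]

/-- The underlying space of the fiber product `𝔼[f] = X ×_Y E`. -/
def fiberKer (f : X →ₗ[ℂ] Y) (q : E →ₗ[ℂ] Y) : Submodule ℂ (X × E) :=
  LinearMap.ker (f.comp (LinearMap.fst ℂ X E) - q.comp (LinearMap.snd ℂ X E))

lemma mem_fiberKer (f : X →ₗ[ℂ] Y) (q : E →ₗ[ℂ] Y) (p : X × E) :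
    p ∈ fiberKer f q ↔ f p.1 = q p.2 := by
  simp [fiberKer, sub_eq_zero]

lemma fiber_invariant (τX : Representation ℂ Kˣ X) (ρE : Rep K E)
    (τY : Representation ℂ Kˣ Y) (f : X →ₗ[ℂ] Y) (q : E →ₗ[ℂ] Y)
    (hf : ∀ (u : Kˣ) (x : X), f (τX u x) = τY u (f x))
    (hq : sCoinvKer ρE ≤ LinearMap.ker q)
    (hqT : ∀ (u : Kˣ) (v : E), q (ρE (xT u) v) = τY u (q v)) :
    GRep.Invariant (prodRepTE τX ρE) (fiberKer f q) := by
  intro g p hp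
  rw [mem_fiberKer] at hp ⊢
  have hsb : q (ρE (sS (((g.t⁻¹ : Kˣ) : K) * g.s)) p.2) = q p.2 := by
    have h1 : ρE (sS (((g.t⁻¹ : Kˣ) : K) * g.s)) p.2 - p.2 ∈ sCoinvKer ρE :=
      Submodule.subset_span ⟨_, _, rfl⟩
    have h2 := hq h1
    rw [LinearMap.mem_ker, map_sub, sub_eq_zero] at h2
    exact h2
  have hdecomp : ρE g p.2 = ρE (xT g.t) (ρE (sS (((g.t⁻¹ : Kˣ) : K) * g.s)) p.2) := by
    conv_lhs => rw [aff_decomp g]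
    rw [map_mul, Module.End.mul_apply]
  have h1 : ((prodRepTE τX ρE) g p).1 = τX g.t p.1 := rfl
  have h2 : ((prodRepTE τX ρE) g p).2 = ρE g p.2 := rfl
  rw [h1, h2, hf, hp, hdecomp, hqT, hsb]

end Fiber

/-! ### Jordan blocks of finite-dimensional `T`-modules. -/

section Jordan

variable {K : Type*} [Field K]
variable {X : Type*} [AddCommGroup X] [Module ℂ X]

/-- A Jordan block of a `T`-module: a nonzero indecomposable invariant direct summand. -/
def IsJordanBlock (τ : Representation ℂ Kˣ X) (J : Submodule ℂ X) : Prop :=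
  J ≠ ⊥ ∧ GRep.Invariant τ J ∧ (∃ C : Submodule ℂ X, GRep.Invariant τ C ∧ IsCompl J C) ∧
    ∀ A B : Submodule ℂ X, GRep.Invariant τ A → GRep.Invariant τ B → A ≤ J → B ≤ J →
      A ⊓ B = ⊥ → A ⊔ B = J → A = ⊥ ∨ B = ⊥

end Jordan

/-! ### Invariants and coinvariants for a normal subgroup of an arbitrary group. -/

section Grp

variable {Γ : Type*} [Group Γ]
variable {V W : Type*} [AddCommGroup V] [Module ℂ V] [AddCommGroup W] [Module ℂ W]

/-- Invariants `V^N` under a subgroup `N`. -/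
def grpInv (ρ : Representation ℂ Γ V) (N : Subgroup Γ) : Submodule ℂ V where
  carrier := {v | ∀ n ∈ N, ρ n v = v}
  zero_mem' := fun n _ => map_zero _
  add_mem' {a b} ha hb := fun n hn => by rw [map_add, ha n hn, hb n hn]
  smul_mem' c v hv := fun n hn => by rw [map_smul, hv n hn]

@[simp] lemma mem_grpInv (ρ : Representation ℂ Γ V) (N : Subgroup Γ) (v : V) :
    v ∈ grpInv ρ N ↔ ∀ n ∈ N, ρ n v = v := Iff.rfl

/-- The kernel of the projection to the coinvariants `V_N` under a subgroup `N`. -/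
def grpCoinvKer (ρ : Representation ℂ Γ V) (N : Subgroup Γ) : Submodule ℂ V :=
  Submodule.span ℂ {w : V | ∃ n ∈ N, ∃ v : V, w = ρ n v - v}

lemma grpInv_invariant (ρ : Representation ℂ Γ V) (N : Subgroup Γ) [hN : N.Normal] :
    GRep.Invariant ρ (grpInv ρ N) := by
  intro γ v hv
  rw [mem_grpInv] at hv ⊢
  intro n hn
  have hmem : γ⁻¹ * n * γ ∈ N := by
    have := hN.conj_mem n hn γ⁻¹
    simpa using this
  have key : ρ n (ρ γ v) = ρ γ (ρ (γ⁻¹ * n * γ) v) := by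
    rw [← Module.End.mul_apply, ← map_mul, ← Module.End.mul_apply, ← map_mul]
    congr 1
    group
  rw [key, hv _ hmem]

lemma grpCoinvKer_invariant (ρ : Representation ℂ Γ V) (N : Subgroup Γ) [hN : N.Normal] :
    GRep.Invariant ρ (grpCoinvKer ρ N) := by
  intro γ v hv
  have h : grpCoinvKer ρ N ≤ Submodule.comap (ρ γ) (grpCoinvKer ρ N) := by
    refine Submodule.span_le.2 ?_
    rintro w ⟨n, hn, v', rfl⟩
    simp only [SetLike.mem_coe, Submodule.mem_comap, map_sub]
    have key : ρ γ (ρ n v') = ρ (γ * n * γ⁻¹) (ρ γ v') := by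
      rw [← Module.End.mul_apply, ← map_mul, ← Module.End.mul_apply, ← map_mul]
      congr 1
      group
    rw [key]
    exact Submodule.subset_span ⟨γ * n * γ⁻¹, hN.conj_mem n hn γ, ρ γ v', rfl⟩
  exact h hv

/-- The map induced on `N`-invariants by an equivariant map. -/
def grpInvRestrict (ρ : Representation ℂ Γ V) (σ : Representation ℂ Γ W) (N : Subgroup Γ)
    (f : V →ₗ[ℂ] W) (hf : GRep.Equivariant ρ σ f) : ↥(grpInv ρ N) →ₗ[ℂ] ↥(grpInv σ N) :=
  f.restrict (fun v hv => by
    rw [mem_grpInv] at hv ⊢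
    intro n hn
    rw [← hf n v, hv n hn])

lemma grpCoinvKer_le_comap (ρ : Representation ℂ Γ V) (σ : Representation ℂ Γ W) (N : Subgroup Γ)
    (f : V →ₗ[ℂ] W) (hf : GRep.Equivariant ρ σ f) :
    grpCoinvKer ρ N ≤ (grpCoinvKer σ N).comap f := by
  refine Submodule.span_le.2 ?_
  rintro w ⟨n, hn, v, rfl⟩
  simp only [SetLike.mem_coe, Submodule.mem_comap, map_sub]
  rw [hf]
  exact Submodule.subset_span ⟨n, hn, f v, rfl⟩

/-- The map induced on `N`-coinvariants by an equivariant map. -/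
def grpCoinvMap (ρ : Representation ℂ Γ V) (σ : Representation ℂ Γ W) (N : Subgroup Γ)
    (f : V →ₗ[ℂ] W) (hf : GRep.Equivariant ρ σ f) :
    (V ⧸ grpCoinvKer ρ N) →ₗ[ℂ] (W ⧸ grpCoinvKer σ N) :=
  Submodule.mapQ _ _ f (grpCoinvKer_le_comap ρ σ N f hf)

end Grp

/-! ### Tate L-factors of finite-dimensional `T`-modules. -/

section Lfactor

variable {K : Type*} [NontriviallyNormedField K]
variable {X : Type*} [AddCommGroup X] [Module ℂ X]

/-- The part of a `T`-module where the `χ`-twisted action is unramified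
(trivial on the norm-one units). -/
def unrPart (τ : Representation ℂ Kˣ X) (χ : Kˣ →* ℂˣ) : Submodule ℂ X where
  carrier := {x | ∀ u : Kˣ, ‖(u : K)‖ = 1 → (χ u : ℂ) • τ u x = x}
  zero_mem' := fun u _ => by simp
  add_mem' {a b} ha hb := fun u hu => by rw [map_add, smul_add, ha u hu, hb u hu]
  smul_mem' c x hx := fun u hu => by
    rw [map_smul, smul_comm, hx u hu]

lemma unrPart_stable (τ : Representation ℂ Kˣ X) (χ : Kˣ →* ℂˣ) (ϖ : Kˣ) :
    ∀ x ∈ unrPart τ χ, ((χ ϖ : ℂ) • τ ϖ) x ∈ unrPart τ χ := by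
  intro x hx u hu
  have comm : τ u (τ ϖ x) = τ ϖ (τ u x) := by
    rw [← Module.End.mul_apply, ← map_mul, mul_comm, map_mul, Module.End.mul_apply]
  calc (χ u : ℂ) • τ u (((χ ϖ : ℂ) • τ ϖ) x)
      = (χ ϖ : ℂ) • ((χ u : ℂ) • τ u (τ ϖ x)) := by
        rw [LinearMap.smul_apply, map_smul, smul_comm]
    _ = (χ ϖ : ℂ) • τ ϖ ((χ u : ℂ) • τ u x) := by rw [comm, map_smul]
    _ = ((χ ϖ : ℂ) • τ ϖ) x := by rw [hx u hu, LinearMap.smul_apply]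

/-- The twisted uniformizer action on the unramified part. -/
def twistOp (τ : Representation ℂ Kˣ X) (χ : Kˣ →* ℂˣ) (ϖ : Kˣ) :
    ↥(unrPart τ χ) →ₗ[ℂ] ↥(unrPart τ χ) :=
  LinearMap.restrict ((χ ϖ : ℂ) • τ ϖ) (unrPart_stable τ χ ϖ)

/-- The Tate `L`-factor `L(s, χ ⊗ X) = det(1 - q^{-s}·(χ·τ)(ϖ) | X^{unr,χ})⁻¹` of a
(finite-dimensional) `T`-module `X`, relative to a uniformizer `ϖ`. -/
def Lfactor (τ : Representation ℂ Kˣ X) (χ : Kˣ →* ℂˣ) (ϖ : Kˣ) (s : ℂ) : ℂ :=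
  (LinearMap.det (LinearMap.id - (‖(ϖ : K)‖ : ℂ) ^ s • twistOp τ χ ϖ))⁻¹

end Lfactor

/-! ### The concrete `TS`-modules `𝕊`, `C_c^∞(k)`, `C_b^∞(k^×)` and `𝔼[χ]`. -/

section Concrete

open Aff

variable (K : Type*) [NontriviallyNormedField K]

/-- The representation of `TS` on functions on `k^×`:
`(s_b g)(x) = ψ(bx) g(x)`, `(x_λ g)(x) = g(xλ)`. -/
def repCx (ψ : AddChar K ℂ) : Rep K (Kˣ → ℂ) where
  toFun g :=
    { toFun := fun f x => ψ (g.s * (x : K)) * f (x * g.t)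
      map_add' := fun f₁ f₂ => by funext x; simp [mul_add]
      map_smul' := fun c f => by
        funext x
        simp only [Pi.smul_apply, smul_eq_mul, RingHom.id_apply]
        ring }
  map_one' := by
    apply LinearMap.ext; intro f; funext x
    simp
  map_mul' g h := by
    apply LinearMap.ext; intro f; funext x
    show ψ ((g.s + (g.t : K) * h.s) * (x : K)) * f (x * (g.t * h.t))
        = ψ (g.s * (x : K)) * (ψ (h.s * ((x * g.t : Kˣ) : K)) * f (x * g.t * h.t))
    have harg : (g.s + (g.t : K) * h.s) * (x : K)
        = g.s * (x : K) + h.s * ((x * g.t : Kˣ) : K) := by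
      push_cast
      ring
    rw [harg, AddChar.map_add_eq_mul, ← mul_assoc x g.t h.t]
    ring

@[simp] lemma repCx_apply (ψ : AddChar K ℂ) (g : Aff K) (f : Kˣ → ℂ) (x : Kˣ) :
    repCx K ψ g f x = ψ (g.s * (x : K)) * f (x * g.t) := rfl

/-- The `χ`-twisted representation of `TS` on functions on `k`:
`(s_b g)(x) = ψ(bx) g(x)`, `(x_λ g)(x) = χ(λ) g(xλ)`.  (Take `χ = 1` for the
untwisted action on `C_c^∞(k)`; the module `𝔼[χ]` is `C_c^∞(k)` with the twisted action.) -/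
def repCc (ψ : AddChar K ℂ) (χ : Kˣ →* ℂˣ) : Rep K (K → ℂ) where
  toFun g :=
    { toFun := fun f x => (χ g.t : ℂ) * ψ (g.s * x) * f (x * (g.t : K))
      map_add' := fun f₁ f₂ => by funext x; simp [mul_add]
      map_smul' := fun c f => by
        funext x
        simp only [Pi.smul_apply, smul_eq_mul, RingHom.id_apply]
        ring }
  map_one' := by
    apply LinearMap.ext; intro f; funext x
    simp
  map_mul' g h := by
    apply LinearMap.ext; intro f; funext x
    show (χ (g.t * h.t) : ℂ) * ψ ((g.s + (g.t : K) * h.s) * x) * f (x * ((g.t * h.t : Kˣ) : K))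
        = (χ g.t : ℂ) * ψ (g.s * x) * ((χ h.t : ℂ) * ψ (h.s * (x * (g.t : K)))
            * f (x * (g.t : K) * (h.t : K)))
    have harg : (g.s + (g.t : K) * h.s) * x = g.s * x + h.s * (x * (g.t : K)) := by ring
    have harg2 : x * ((g.t * h.t : Kˣ) : K) = x * (g.t : K) * (h.t : K) := by
      push_cast
      ring
    rw [harg, harg2, AddChar.map_add_eq_mul, map_mul]
    push_cast
    ring

@[simp] lemma repCc_apply (ψ : AddChar K ℂ) (χ : Kˣ →* ℂˣ) (g : Aff K) (f : K → ℂ) (x : K) :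
    repCc K ψ χ g f x = (χ g.t : ℂ) * ψ (g.s * x) * f (x * (g.t : K)) := rfl

/-- The one-dimensional `TS`-module `ℂ_χ` on which `S` acts trivially and `x_λ` by `χ(λ)`. -/
def chiRep (χ : Kˣ →* ℂˣ) : Rep K ℂ where
  toFun g := (χ g.t : ℂ) • LinearMap.id
  map_one' := by
    apply LinearMap.ext; intro c
    simp
  map_mul' g h := by
    apply LinearMap.ext; intro c
    simp only [mul_t, map_mul, LinearMap.smul_apply, LinearMap.id_apply, Module.End.mul_apply,
      Units.val_mul, smul_eq_mul]
    ring

/-- `C_c^∞(k)`: locally constant, compactly supported functions on `k`. -/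
def CcK : Submodule ℂ (K → ℂ) where
  carrier := {f | IsLocallyConstant f ∧ HasCompactSupport f}
  zero_mem' := ⟨IsLocallyConstant.const 0, by
    rw [hasCompactSupport_def]
    simp⟩
  add_mem' {a b} ha hb := ⟨ha.1.comp₂ hb.1 (· + ·), ha.2.add hb.2⟩
  smul_mem' c f hf := by
    refine ⟨?_, hf.2.mono (Function.support_const_smul_subset c f)⟩
    exact hf.1.comp (fun z => c * z)

@[simp] lemma mem_CcK (f : K → ℂ) :
    f ∈ CcK K ↔ IsLocallyConstant f ∧ HasCompactSupport f := Iff.rfl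

/-- `𝕊 = C_c^∞(k^×)`: locally constant, compactly supported functions on `k^×`. -/
def SSx : Submodule ℂ (Kˣ → ℂ) where
  carrier := {f | IsLocallyConstant f ∧ HasCompactSupport f}
  zero_mem' := ⟨IsLocallyConstant.const 0, by
    rw [hasCompactSupport_def]
    simp⟩
  add_mem' {a b} ha hb := ⟨ha.1.comp₂ hb.1 (· + ·), ha.2.add hb.2⟩
  smul_mem' c f hf := by
    refine ⟨?_, hf.2.mono (Function.support_const_smul_subset c f)⟩
    exact hf.1.comp (fun z => c * z)

@[simp] lemma mem_SSx (f : Kˣ → ℂ) :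
    f ∈ SSx K ↔ IsLocallyConstant f ∧ HasCompactSupport f := Iff.rfl

/-- `C_b^∞(k^×)`: locally constant functions on `k^×` whose support has compact closure
in `k`. -/
def Cb : Submodule ℂ (Kˣ → ℂ) where
  carrier := {f | IsLocallyConstant f ∧
    IsCompact (closure (((↑) : Kˣ → K) '' Function.support f))}
  zero_mem' := ⟨IsLocallyConstant.const 0, by simp⟩
  add_mem' {a b} ha hb := by
    refine ⟨ha.1.comp₂ hb.1 (· + ·), ?_⟩
    refine IsCompact.of_isClosed_subset (ha.2.union hb.2) isClosed_closure ?_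
    refine closure_minimal ?_ (ha.2.isClosed.union hb.2.isClosed)
    refine (Set.image_mono (Function.support_add _ _)).trans ?_
    rw [Set.image_union]
    exact Set.union_subset_union subset_closure subset_closure
  smul_mem' c f hf := by
    refine ⟨hf.1.comp (fun z => c * z), ?_⟩
    refine IsCompact.of_isClosed_subset hf.2 isClosed_closure ?_
    refine closure_mono ?_
    exact Set.image_mono (Function.support_const_smul_subset c f)

@[simp] lemma mem_Cb (f : Kˣ → ℂ) :
    f ∈ Cb K ↔ IsLocallyConstant f ∧
      IsCompact (closure (((↑) : Kˣ → K) '' Function.support f)) := Iff.rfl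

variable {K}

lemma SSx_invariant (ψ : AddChar K ℂ) (hψlc : IsLocallyConstant (⇑ψ)) :
    GRep.Invariant (repCx K ψ) (SSx K) := by
  rintro g f hf
  rw [mem_SSx] at hf ⊢
  obtain ⟨hlc, hcs⟩ := hf
  have heq : repCx K ψ g f
      = (fun x : Kˣ => ψ (g.s * (x : K))) * (f ∘ (Homeomorph.mulRight g.t)) := rfl
  constructor
  · rw [heq]
    refine IsLocallyConstant.mul ?_ ?_
    · exact hψlc.comp_continuous (continuous_const.mul Units.continuous_val)
    · exact hlc.comp_continuous (Homeomorph.mulRight g.t).continuous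
  · rw [heq]
    exact (hcs.comp_homeomorph (Homeomorph.mulRight g.t)).mul_left

lemma CcK_invariant (ψ : AddChar K ℂ) (hψlc : IsLocallyConstant (⇑ψ)) (χ : Kˣ →* ℂˣ) :
    GRep.Invariant (repCc K ψ χ) (CcK K) := by
  rintro g f hf
  rw [mem_CcK] at hf ⊢
  obtain ⟨hlc, hcs⟩ := hf
  have hne : ((g.t : Kˣ) : K) ≠ 0 := g.t.ne_zero
  have heq : repCc K ψ χ g f
      = (fun x : K => (χ g.t : ℂ) * ψ (g.s * x)) * (f ∘ (Homeomorph.mulRight₀ (g.t : K) hne)) :=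
    rfl
  constructor
  · rw [heq]
    refine IsLocallyConstant.mul ?_ ?_
    · exact ((hψlc.comp_continuous (continuous_const.mul continuous_id)).comp
        (fun z => (χ g.t : ℂ) * z))
    · exact hlc.comp_continuous (Homeomorph.mulRight₀ (g.t : K) hne).continuous
  · rw [heq]
    exact (hcs.comp_homeomorph (Homeomorph.mulRight₀ (g.t : K) hne)).mul_left

/-- The `TS`-module `𝕊 = C_c^∞(k^×)`. -/
def SRep (ψ : AddChar K ℂ) (hψlc : IsLocallyConstant (⇑ψ)) : Rep K ↥(SSx K) :=
  GRep.sub (repCx K ψ) (SSx_invariant ψ hψlc)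

/-- The `TS`-module `𝔼[χ]`, i.e. `C_c^∞(k)` with the `χ`-twisted action. -/
def ERep (ψ : AddChar K ℂ) (hψlc : IsLocallyConstant (⇑ψ)) (χ : Kˣ →* ℂˣ) : Rep K ↥(CcK K) :=
  GRep.sub (repCc K ψ χ) (CcK_invariant ψ hψlc χ)

/-- The `TS`-module `𝕊^s`, a direct sum of `s` copies of `𝕊`. -/
def SRepPow (ψ : AddChar K ℂ) (hψlc : IsLocallyConstant (⇑ψ)) (s : ℕ) :
    Rep K (Fin s → ↥(SSx K)) where
  toFun g := LinearMap.pi fun i => (SRep ψ hψlc g).comp (LinearMap.proj i)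
  map_one' := by
    apply LinearMap.ext; intro v; funext i
    simp
  map_mul' g h := by
    apply LinearMap.ext; intro v; funext i
    simp [map_mul]

/-- The submodule `E` of `C_b^∞(k^×)` consisting of functions which are `χ`-eigenvectors
modulo `𝕊`; the quotient `E/𝕊` is the `χ`-eigenspace of `C_b^∞(k^×)/𝕊`. -/
def quotEigen (ψ : AddChar K ℂ) (χ : Kˣ →* ℂˣ) : Submodule ℂ (Kˣ → ℂ) where
  carrier := {f | f ∈ Cb K ∧ ∀ u : Kˣ, repCx K ψ (Aff.xT u) f - (χ u : ℂ) • f ∈ SSx K}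
  zero_mem' := ⟨(Cb K).zero_mem, fun u => by simpa using (SSx K).zero_mem⟩
  add_mem' {a b} ha hb := by
    refine ⟨(Cb K).add_mem ha.1 hb.1, fun u => ?_⟩
    rw [map_add, smul_add, add_sub_add_comm]
    exact (SSx K).add_mem (ha.2 u) (hb.2 u)
  smul_mem' c f hf := by
    refine ⟨(Cb K).smul_mem c hf.1, fun u => ?_⟩
    rw [map_smul, smul_comm, ← smul_sub]
    exact (SSx K).smul_mem c (hf.2 u)

/-- Evaluation at `0 ∈ k`, realizing the quotient map `𝔼[χ] → ℂ_χ` with kernel `𝕊`. -/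
def ev0 : ↥(CcK K) →ₗ[ℂ] ℂ where
  toFun f := (f : K → ℂ) 0
  map_add' f g := rfl
  map_smul' c f := rfl

end Concrete

/-! ### The diagonal torus in GL(2). -/

section GL2

variable {K : Type*} [Field K]

/-- The diagonal element `diag(a, b)` of `GL(2, K)`. -/
def diagGL (a b : Kˣ) : Matrix.GeneralLinearGroup (Fin 2) K where
  val := Matrix.diagonal ![(a : K), (b : K)]
  inv := Matrix.diagonal ![((a : K))⁻¹, ((b : K))⁻¹]
  val_inv := by
    ext i j
    fin_cases i <;> fin_cases j <;>
      simp [Matrix.mul_apply, Fin.sum_univ_two, Matrix.diagonal, Matrix.one_apply,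
        a.ne_zero, b.ne_zero]
  inv_val := by
    ext i j
    fin_cases i <;> fin_cases j <;>
      simp [Matrix.mul_apply, Fin.sum_univ_two, Matrix.diagonal, Matrix.one_apply,
        a.ne_zero, b.ne_zero]

end GL2

section Statements

open Aff

variable {K : Type*} [NontriviallyNormedField K] [IsUltrametricDist K] [ProperSpace K]

/-!
An element of the group algebra whose coefficients sum to `1` acts as the identity on invariants.
By compactness of the integers of `k` some nonzero natural number `n` is topologically nilpotent in
`k`, so by smoothness every vector `v` is fixed by some `s_{n^m b} = s_b ^ (n^m)`, and averaging
over the powers of `s_b` then kills `s_b v - v`. Since `S` is commutative, the product of such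
averages kills a whole sum of vectors of this form, so an invariant vector in the kernel of
`M → M_S` is both fixed and killed by one such product.
-/

section GroupAlgebra

open MonoidAlgebra Representation

section Augmentation

variable (k G : Type*) [CommSemiring k] [Monoid G]

/-- The augmentation `∑ a_g g ↦ ∑ a_g` of the group algebra. The elements of augmentation one play
the role of weighted averages over `G`. -/
def augmentation : MonoidAlgebra k G →ₐ[k] k :=
  MonoidAlgebra.lift k k G 1

variable {G}

lemma augmentation_of (g : G) : augmentation k G (of k G g) = 1 := by
  rw [augmentation, lift_of, MonoidHom.one_apply]

end Augmentation

lemma asAlgebraHom_apply_of_mem_invariants {k G V : Type*} [CommRing k] [Group G]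
    [AddCommGroup V] [Module k V] (ρ : Representation k G V) (a : MonoidAlgebra k G) {v : V}
    (hv : v ∈ ρ.invariants) : ρ.asAlgebraHom a v = augmentation k G a • v := by
  induction a using MonoidAlgebra.induction_on with
  | of g => rw [asAlgebraHom_of, augmentation_of, one_smul, hv g]
  | add a b ha hb => rw [map_add, map_add, LinearMap.add_apply, ha, hb, add_smul]
  | smul r a ha => rw [map_smul, map_smul, LinearMap.smul_apply, ha, smul_assoc]

section CyclicAverage

variable (k : Type*) {G : Type*} [Field k] [Monoid G]

/-- The average of the powers `1, g, …, g ^ (n - 1)` in the group algebra; it is `0` when `n = 0`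
in `k`. -/
def cyclicAverage (g : G) (n : ℕ) : MonoidAlgebra k G :=
  (n : k)⁻¹ • ∑ i ∈ Finset.range n, of k G g ^ i

lemma augmentation_cyclicAverage (g : G) {n : ℕ} (hn : (n : k) ≠ 0) :
    augmentation k G (cyclicAverage k g n) = 1 := by
  simp only [cyclicAverage, map_smul, map_sum, map_pow, augmentation_of, one_pow, Finset.sum_const,
    Finset.card_range, nsmul_eq_mul, mul_one, smul_eq_mul, inv_mul_cancel₀ hn]

lemma cyclicAverage_mul_of_sub_one (g : G) (n : ℕ) :
    cyclicAverage k g n * (of k G g - 1) = (n : k)⁻¹ • (of k G g ^ n - 1) := by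
  rw [cyclicAverage, smul_mul_assoc, geom_sum_mul]

end CyclicAverage

section Periodic

variable {k G V : Type*} [Field k] [AddCommGroup V] [Module k V]

lemma asAlgebraHom_cyclicAverage_apply_sub [Monoid G] (ρ : Representation k G V) {g : G} {n : ℕ}
    {v : V} (hv : Function.IsPeriodicPt (ρ g) n v) :
    ρ.asAlgebraHom (cyclicAverage k g n) (ρ g v - v) = 0 := by
  have hfix : (ρ g ^ n) v = v := by rw [Module.End.pow_apply]; exact hv
  have hsub : ρ g v - v = ρ.asAlgebraHom (of k G g - 1) v := by
    rw [map_sub, asAlgebraHom_of, map_one, LinearMap.sub_apply, Module.End.one_apply]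
  rw [hsub, ← Module.End.mul_apply, ← map_mul, cyclicAverage_mul_of_sub_one, map_smul, map_sub,
    map_pow, asAlgebraHom_of, map_one, LinearMap.smul_apply, LinearMap.sub_apply, hfix,
    Module.End.one_apply, sub_self, smul_zero]

variable [CharZero k]

lemma exists_augmentation_eq_one_and_asAlgebraHom_apply_eq_zero [CommMonoid G]
    (ρ : Representation k G V) (hρ : ∀ g v, v ∈ Function.periodicPts (ρ g)) {w : V}
    (hw : w ∈ Coinvariants.ker ρ) :
    ∃ a : MonoidAlgebra k G, augmentation k G a = 1 ∧ ρ.asAlgebraHom a w = 0 := by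
  induction hw using Submodule.span_induction with
  | mem _ hgv =>
    obtain ⟨⟨g, v⟩, rfl⟩ := hgv
    obtain ⟨n, hn, hv⟩ := hρ g v
    exact ⟨cyclicAverage k g n, augmentation_cyclicAverage k g (Nat.cast_ne_zero.2 hn.ne'),
      asAlgebraHom_cyclicAverage_apply_sub ρ hv⟩
  | zero => exact ⟨1, map_one _, map_zero _⟩
  | add x y _ _ hx hy =>
    obtain ⟨a, ha, hax⟩ := hx
    obtain ⟨b, hb, hby⟩ := hy
    have habx : ρ.asAlgebraHom (a * b) x = 0 := by
      rw [mul_comm, map_mul, Module.End.mul_apply, hax, map_zero]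
    have haby : ρ.asAlgebraHom (a * b) y = 0 := by
      rw [map_mul, Module.End.mul_apply, hby, map_zero]
    exact ⟨a * b, by rw [map_mul, ha, hb, one_mul], by rw [map_add, habx, haby, add_zero]⟩
  | smul c x _ hx =>
    obtain ⟨a, ha, hax⟩ := hx
    exact ⟨a, ha, by rw [map_smul, hax, smul_zero]⟩

theorem disjoint_invariants_coinvariantsKer [CommGroup G] (ρ : Representation k G V)
    (hρ : ∀ g v, v ∈ Function.periodicPts (ρ g)) :
    Disjoint ρ.invariants (Coinvariants.ker ρ) := by
  rw [Submodule.disjoint_def]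
  intro v hinv hker
  obtain ⟨a, ha, hav⟩ := exists_augmentation_eq_one_and_asAlgebraHom_apply_eq_zero ρ hρ hker
  rwa [asAlgebraHom_apply_of_mem_invariants ρ a hinv, ha, one_smul] at hav

end Periodic

end GroupAlgebra

section Translations

variable {F : Type*} [Field F] {V : Type*} [AddCommGroup V] [Module ℂ V]

/-- `S ≅ (F, +)` as a subgroup of `TS`, written multiplicatively. -/
def sSHom : Multiplicative F →* Aff F where
  toFun b := sS b.toAdd
  map_one' := rfl
  map_mul' a b := by ext <;> simp

/-- The restriction of a `TS`-module to `S`. -/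
def sRep (ρ : Rep F V) : Representation ℂ (Multiplicative F) V :=
  ρ.comp sSHom

lemma sRep_ofAdd_pow (ρ : Rep F V) (b : F) (n : ℕ) :
    sRep ρ (Multiplicative.ofAdd b) ^ n = ρ (sS (n * b)) := by
  rw [← map_pow, ← ofAdd_nsmul, nsmul_eq_mul]
  rfl

lemma invariants_sRep (ρ : Rep F V) : (sRep ρ).invariants = sInv ρ :=
  rfl

lemma coinvariantsKer_sRep (ρ : Rep F V) : Representation.Coinvariants.ker (sRep ρ) = sCoinvKer ρ :=
  congrArg (Submodule.span ℂ) <| Set.ext fun _ =>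
    ⟨fun ⟨⟨b, v⟩, h⟩ => ⟨b.toAdd, v, h.symm⟩,
      fun ⟨b, v, h⟩ => ⟨⟨Multiplicative.ofAdd b, v⟩, h.symm⟩⟩

variable [TopologicalSpace F]

lemma continuous_sS : Continuous (sS : F → Aff F) :=
  continuous_induced_rng.2 (continuous_const.prodMk continuous_id)

open Filter Topology in
lemma IsSmoothRep.eventually_sS_apply_eq {ρ : Rep F V} (hρ : IsSmoothRep ρ) (v : V) :
    ∀ᶠ b in 𝓝 (0 : F), ρ (sS b) v = v :=
  ((hρ v).preimage continuous_sS).mem_nhds (LinearMap.congr_fun (map_one ρ) v)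

lemma IsSmoothRep.mem_periodicPts_sRep [ContinuousMul F] {ρ : Rep F V} (hρ : IsSmoothRep ρ)
    {n : ℕ} (hn₀ : n ≠ 0) (hn : IsTopologicallyNilpotent (n : F)) (b : Multiplicative F) (v : V) :
    v ∈ Function.periodicPts (sRep ρ b) := by
  have hlim : Filter.Tendsto (fun m : ℕ => (n : F) ^ m * b.toAdd) Filter.atTop (nhds 0) := by
    simpa only [zero_mul] using Filter.Tendsto.mul_const b.toAdd hn
  obtain ⟨m, hm⟩ := (hlim.eventually (hρ.eventually_sS_apply_eq v)).exists
  refine Function.mk_mem_periodicPts (pow_pos (Nat.pos_of_ne_zero hn₀) m) ?_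
  rw [Function.IsPeriodicPt, Function.IsFixedPt, ← Module.End.pow_apply, ← ofAdd_toAdd b,
    sRep_ofAdd_pow, Nat.cast_pow, hm]

end Translations

lemma exists_ne_zero_natCast_norm_lt_one (R : Type*) [SeminormedRing R] [NormOneClass R]
    [IsUltrametricDist R] [ProperSpace R] : ∃ n : ℕ, n ≠ 0 ∧ ‖(n : R)‖ < 1 := by
  have hball (n : ℕ) : (n : R) ∈ Metric.closedBall (0 : R) 1 :=
    mem_closedBall_zero_iff.2 (IsUltrametricDist.norm_natCast_le_one R n)
  obtain ⟨_, -, φ, hφ, hlim⟩ := tendsto_subseq_of_bounded Metric.isBounded_closedBall hball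
  obtain ⟨N, hN⟩ := Metric.cauchySeq_iff.1 hlim.cauchySeq 1 one_pos
  have hlt : φ N < φ (N + 1) := hφ N.lt_succ_self
  refine ⟨φ (N + 1) - φ N, Nat.sub_ne_zero_of_lt hlt, ?_⟩
  rw [Nat.cast_sub hlt.le, ← dist_eq_norm]
  exact hN (N + 1) N.le_succ N le_rfl

theorem statement3_general {F : Type*} [Field F] [TopologicalSpace F] [ContinuousMul F]
    {n : ℕ} (hn₀ : n ≠ 0) (hn : IsTopologicallyNilpotent (n : F))
    {V : Type*} [AddCommGroup V] [Module ℂ V] (ρ : Rep F V) (hρ : IsSmoothRep ρ) :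
    Function.Injective ((sCoinvKer ρ).mkQ.comp (sInv ρ).subtype) := by
  have hdisj : Disjoint (sInv ρ) (sCoinvKer ρ) := by
    rw [← invariants_sRep, ← coinvariantsKer_sRep]
    exact disjoint_invariants_coinvariantsKer (sRep ρ) (hρ.mem_periodicPts_sRep hn₀ hn)
  rw [← LinearMap.ker_eq_bot, LinearMap.ker_comp, Submodule.ker_mkQ]
  exact Submodule.disjoint_iff_comap_eq_bot.1 hdisj

theorem statement3
    (hchar : (2 : K) ≠ 0)
    {V : Type*} [AddCommGroup V] [Module ℂ V]
    (ρ : Rep K V) (hρ : IsSmoothRep ρ) :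
    Function.Injective ((sCoinvKer ρ).mkQ.comp (sInv ρ).subtype) := by
  obtain ⟨n, hn₀, hn⟩ := exists_ne_zero_natCast_norm_lt_one K
  exact statement3_general hn₀ (tendsto_pow_atTop_nhds_zero_of_norm_lt_one hn) ρ hρ

end Statements

end PSW
end
end

section
/- Every irreducible smooth TS-module V with V^S ≠ V is isomorphic, as a TS-module, to 𝕊 = C_c^∞(k^×). -/
noncomputable section

open scoped Classical

namespace PSW

/-!
The operators `s_b` commute, and each has finite order on every smooth vector, hence is
diagonalizable. So a proper `S`-stable subspace of a smooth module lies in the kernel of a common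
eigenfunctional of `S` (Zorn), and by self-duality of `k` its eigencharacter is `b ↦ ψ (a b)` for
some `a`. In an irreducible module on which `S` acts nontrivially `a ≠ 0`, and translating by `T`
makes `a = 1`. If `lam` is the resulting functional, `v ↦ (u ↦ lam (x_u v))` is a nonzero
equivariant map into `𝕊`. To see that `𝕊` is irreducible, apply the same existence result to a
proper submodule `U`: the functional obtained kills every `f` vanishing at `a`, so `a ≠ 0` and it is
a multiple of evaluation at `a`; as it kills the `T`-translates of every `f ∈ U`, `U = 0`.
-/

section Diagonalizable

open Polynomial Module.End

variable {k V ι : Type*} [Field k] [AddCommGroup V] [Module k V]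

lemma ker_aeval_prod_X_sub_C_le_iSup_eigenspace (f : Module.End k V) (s : Finset k) :
    LinearMap.ker (aeval f (∏ μ ∈ s, (X - C μ))) ≤ ⨆ μ, f.eigenspace μ := by
  induction s using Finset.induction_on with
  | empty => simp [Module.End.one_eq_id]
  | insert μ s hμ ih =>
    have hcoprime : IsCoprime (X - C μ) (∏ ν ∈ s, (X - C ν)) :=
      IsCoprime.prod_right fun ν hν =>
        isCoprime_X_sub_C_of_isUnit_sub (sub_ne_zero.2 (ne_of_mem_of_not_mem hν hμ).symm).isUnit
    rw [Finset.prod_insert hμ, ← sup_ker_aeval_eq_ker_aeval_mul_of_coprime f hcoprime]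
    refine sup_le (le_iSup_of_le μ fun v hv => ?_) ih
    simpa [mem_eigenspace_iff, sub_eq_zero] using hv

lemma iSup_eigenspace_eq_top_of_forall_exists_pow_apply_eq [IsAlgClosed k] [CharZero k]
    (f : Module.End k V) (hf : ∀ v, ∃ n : ℕ, 0 < n ∧ (f ^ n) v = v) :
    ⨆ μ, f.eigenspace μ = ⊤ := by
  refine eq_top_iff.2 fun v _ => ?_
  obtain ⟨n, hn, hv⟩ := hf v
  have : NeZero n := ⟨hn.ne'⟩
  obtain ⟨ζ, hζ⟩ := HasEnoughRootsOfUnity.exists_primitiveRoot k n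
  apply ker_aeval_prod_X_sub_C_le_iSup_eigenspace f (nthRootsFinset n (1 : k))
  rw [← X_pow_sub_one_eq_prod hn hζ]
  simp [hv]

lemma exists_maximal_invariant_notMem {R V ι : Type*} [Semiring R] [AddCommMonoid V]
    [Module R V] (f : ι → Module.End R V) {N : Submodule R V}
    (hN : ∀ i, N ∈ (f i).invtSubmodule) {v : V} (hv : v ∉ N) :
    ∃ M, N ≤ M ∧
      Maximal (fun M : Submodule R V => (∀ i, M ∈ (f i).invtSubmodule) ∧ v ∉ M) M := by
  refine zorn_le_nonempty₀ {M : Submodule R V | (∀ i, M ∈ (f i).invtSubmodule) ∧ v ∉ M}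
    (fun c hc hchain M hM => ⟨sSup c, ⟨fun i => ?_, ?_⟩, fun _ => le_sSup⟩) N ⟨hN, hv⟩
  · exact sSup_le fun P hP => ((hc hP).1 i).trans (Submodule.comap_mono (le_sSup hP))
  · rw [Submodule.mem_sSup_of_directed ⟨M, hM⟩ hchain.directedOn]
    rintro ⟨P, hP, hvP⟩
    exact (hc hP).2 hvP

/- Every submodule `{x | f i x - μ • x ∈ M}` other than `M` contains `v`, but no two of them do; as
the eigenspaces of `f i` span, one of them is everything. -/
lemma exists_forall_apply_sub_smul_mem_of_maximal (f : ι → Module.End k V)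
    (hcomm : ∀ i j, Commute (f i) (f j)) (hdiag : ∀ i, ⨆ μ, (f i).eigenspace μ = ⊤)
    {v : V} {M : Submodule k V}
    (hM : Maximal (fun M : Submodule k V => (∀ i, M ∈ (f i).invtSubmodule) ∧ v ∉ M) M) (i : ι) :
    ∃ μ : k, ∀ x, f i x - μ • x ∈ M := by
  let E (μ : k) : Submodule k V := M.comap (f i - algebraMap k _ μ)
  have mem_E {μ : k} {x : V} : x ∈ E μ ↔ f i x - μ • x ∈ M := by simp [E]
  have hE_invt (μ : k) (j : ι) : E μ ∈ (f j).invtSubmodule := fun x hx => by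
    have hswap : f i (f j x) = f j (f i x) := LinearMap.congr_fun (hcomm i j) x
    rw [Submodule.mem_comap, mem_E, hswap, ← map_smul, ← map_sub]
    exact hM.prop.1 j (mem_E.1 hx)
  have hM_le (μ : k) : M ≤ E μ := fun x hx =>
    mem_E.2 (M.sub_mem (hM.prop.1 i hx) (M.smul_mem μ hx))
  have hE_le {μ : k} (hv : v ∉ E μ) : E μ ≤ M := hM.le_of_ge ⟨hE_invt μ, hv⟩ (hM_le μ)
  have heigen_le (μ : k) : (f i).eigenspace μ ≤ E μ := fun x hx =>
    mem_E.2 (by simp [mem_eigenspace_iff.1 hx])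
  obtain ⟨μ, hμ⟩ : ∃ μ, v ∈ E μ := by
    by_contra! hcon
    have hM_top : ⊤ ≤ M := by
      rw [← hdiag i]
      exact iSup_le fun μ => (heigen_le μ).trans (hE_le (hcon μ))
    exact hM.prop.2 (hM_top trivial)
  have hE_top : ⊤ ≤ E μ := by
    rw [← hdiag i]
    refine iSup_le fun ν => ?_
    obtain rfl | hne := eq_or_ne ν μ
    · exact heigen_le ν
    refine (heigen_le ν).trans ((hE_le fun hν => hM.prop.2 ?_).trans (hM_le μ))
    have hsmul : (ν - μ) • v ∈ M := by
      convert M.sub_mem (mem_E.1 hμ) (mem_E.1 hν) using 1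
      module
    exact (M.smul_mem_iff (sub_ne_zero.2 hne)).1 hsmul
  exact ⟨μ, fun x => mem_E.1 (hE_top trivial)⟩

theorem exists_common_eigenfunctional (f : ι → Module.End k V)
    (hcomm : ∀ i j, Commute (f i) (f j)) (hdiag : ∀ i, ⨆ μ, (f i).eigenspace μ = ⊤)
    {N : Submodule k V} (hN : ∀ i, N ∈ (f i).invtSubmodule) (hN_top : N ≠ ⊤) :
    ∃ (lam : Module.Dual k V) (χ : ι → k),
      lam ≠ 0 ∧ N ≤ LinearMap.ker lam ∧ ∀ i v, lam (f i v) = χ i * lam v := by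
  obtain ⟨v, -, hv⟩ := SetLike.exists_of_lt hN_top.lt_top
  obtain ⟨M, hNM, hM⟩ := exists_maximal_invariant_notMem f hN hv
  choose χ hχ using exists_forall_apply_sub_smul_mem_of_maximal f hcomm hdiag hM
  have hM_lt : M < ⊤ := lt_top_iff_ne_top.2 fun h => hM.prop.2 (h ▸ trivial)
  obtain ⟨lam, hlam, hM_ker⟩ := M.exists_le_ker_of_lt_top hM_lt
  refine ⟨lam, χ, hlam, hNM.trans hM_ker, fun i v => ?_⟩
  simpa [sub_eq_zero] using hM_ker (hχ i v)

end Diagonalizable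

section Duality

open MeasureTheory Metric Topology Filter

lemma integral_addChar_eq_zero {G 𝕜 : Type*} [AddGroup G] [MeasurableSpace G]
    [MeasurableAdd G] [RCLike 𝕜] (μ : Measure G) [μ.IsAddRightInvariant] {χ : AddChar G 𝕜}
    (hχ : χ ≠ 1) : ∫ x, χ x ∂μ = 0 := by
  obtain ⟨y, hy⟩ := AddChar.ne_one_iff.1 hχ
  have htranslate := integral_add_right_eq_self (μ := μ) χ y
  simp_rw [AddChar.map_add_eq_mul, integral_mul_const] at htranslate
  by_contra hne
  exact hy (mul_eq_left₀ hne |>.1 htranslate)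

/- If `χ` differed from every `β a`, integrating `β a b * χ (-b)` first over `b` would give `0`,
whereas integrating it first over `a` gives the volume of `A` times that of the annihilator. -/
lemma exists_eq_of_annihilator_le_ker {A B : Type*}
    [AddCommGroup A] [TopologicalSpace A] [IsTopologicalAddGroup A] [CompactSpace A]
    [AddCommGroup B] [TopologicalSpace B] [IsTopologicalAddGroup B] [CompactSpace B]
    (β : AddChar A (AddChar B ℂ)) (hβ : Continuous fun p : A × B => β p.1 p.2)
    (hann_nhds : ∀ᶠ b in 𝓝 0, ∀ a, β a b = 1)
    {χ : AddChar B ℂ} (hχ : Continuous χ)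
    (hann : ∀ b, (∀ a, β a b = 1) → χ b = 1) : ∃ a, β a = χ := by
  by_contra! hne
  borelize A B
  let μ : Measure A := Measure.addHaar
  let ν : Measure B := Measure.addHaar
  let P : Set B := {b | ∀ a, β a b = 1}
  have hP_closed : IsClosed P := by
    simp only [P, Set.ofPred_forall]
    exact isClosed_iInter fun a => isClosed_eq (hβ.comp (.prodMk_right a)) continuous_const
  have hinner_b (a : A) : ∫ b, β a b * χ (-b) ∂ν = 0 := by
    have hdiv : β a * χ⁻¹ ≠ 1 := fun h => hne a (mul_inv_eq_one.1 h)
    simpa using integral_addChar_eq_zero ν hdiv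
  have hinner_a (b : B) :
      ∫ a, β a b * χ (-b) ∂μ = P.indicator (fun _ => (μ.real .univ : ℂ)) b := by
    by_cases hb : b ∈ P
    · have hb' : ∀ a, β a b = 1 := hb
      simp [hb, hb', hann b hb, AddChar.map_neg_eq_inv]
    · let βb : AddChar A ℂ := ⟨fun a => β a b, by simp, by simp [AddChar.map_add_eq_mul]⟩
      have hβb : βb ≠ 1 := fun h => hb fun a => DFunLike.congr_fun h a
      have := integral_addChar_eq_zero μ hβb
      rw [integral_mul_const, Set.indicator_of_notMem hb]
      exact mul_eq_zero_of_left this _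
  have hcont : Continuous fun p : A × B => β p.1 p.2 * χ (-p.2) :=
    hβ.mul (hχ.comp continuous_snd.neg)
  have hswap := integral_integral_swap_of_hasCompactSupport (μ := μ) (ν := ν)
    (f := fun a b => β a b * χ (-b)) hcont (.of_compactSpace _)
  simp_rw [hinner_b, hinner_a, integral_indicator hP_closed.measurableSet,
    setIntegral_const] at hswap
  have hP_pos : ν.real P ≠ 0 := ENNReal.toReal_ne_zero.2
    ⟨(Measure.measure_pos_of_mem_nhds ν hann_nhds).ne', measure_ne_top ν P⟩
  have hA_pos : μ.real .univ ≠ 0 := ENNReal.toReal_ne_zero.2 ⟨NeZero.ne _, measure_ne_top μ _⟩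
  simp [hP_pos, hA_pos] at hswap

lemma eventually_forall_mul_eq_one {R : Type*} [Ring R] [TopologicalSpace R] [ContinuousMul R]
    {ψ : AddChar R ℂ} (hψ : IsLocallyConstant ψ) {C : Set R} (hC : IsCompact C) :
    ∀ᶠ b in 𝓝 0, ∀ a ∈ C, ψ (a * b) = 1 := by
  refine hC.eventually_forall_of_forall_eventually fun a _ => ?_
  have hlim : Tendsto (fun p : R × R => p.2 * p.1) (𝓝 (0, a)) (𝓝 0) :=
    Continuous.tendsto' (by fun_prop) _ _ (by simp)
  exact hlim.eventually (by simpa using hψ.eventually_eq 0)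

variable {K : Type*} [NormedField K]

lemma exists_forall_mul_eq_one_imp {ψ χ : AddChar K ℂ} (hψ : ψ ≠ 1) (hχ : IsLocallyConstant χ) :
    ∃ r > 0, ∀ b, (∀ a ∈ closedBall 0 r, ψ (a * b) = 1) → χ b = 1 := by
  obtain ⟨y, hy⟩ := AddChar.ne_one_iff.1 hψ
  obtain ⟨ε, hε, hχ_ball⟩ := Metric.eventually_nhds_iff.1 (hχ.eventually_eq 0)
  refine ⟨‖y‖ / ε + 1, by positivity, fun b hb => ?_⟩
  by_contra hne
  have hb_norm : ε ≤ ‖b‖ := by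
    by_contra! hlt
    exact hne (by simpa using hχ_ball (y := b) (by simpa using hlt))
  have hb0 : b ≠ 0 := norm_pos_iff.1 (hε.trans_le hb_norm)
  refine hy ?_
  rw [← div_mul_cancel₀ y hb0]
  refine hb _ ?_
  rw [mem_closedBall_zero_iff, norm_div]
  have : ‖y‖ / ‖b‖ ≤ ‖y‖ / ε := by gcongr
  linarith

variable [IsUltrametricDist K] [ProperSpace K]

lemma exists_mulShift_eqOn_closedBall {ψ χ : AddChar K ℂ} (hψ : IsLocallyConstant ψ)
    (hχ : Continuous χ) {r R : ℝ} (hr : 0 < r) (hR : 0 < R)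
    (hann : ∀ b, (∀ a ∈ closedBall 0 r, ψ (a * b) = 1) → χ b = 1) :
    ∃ a ∈ closedBall 0 r, Set.EqOn (ψ.mulShift a) χ (closedBall 0 R) := by
  let A : AddSubgroup K := (IsUltrametricDist.closedBall_openAddSubgroup K hr).toAddSubgroup
  let B : AddSubgroup K := (IsUltrametricDist.closedBall_openAddSubgroup K hR).toAddSubgroup
  have : CompactSpace A := isCompact_iff_compactSpace.1 (isCompact_closedBall (0 : K) r)
  have : CompactSpace B := isCompact_iff_compactSpace.1 (isCompact_closedBall (0 : K) R)
  let β : AddChar A (AddChar B ℂ) :=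
    { toFun := fun a => (ψ.mulShift a).compAddMonoidHom B.subtype
      map_zero_eq_one' := by ext; simp
      map_add_eq_mul' := fun a a' => by ext; simp [add_mul, AddChar.map_add_eq_mul] }
  have hann_nhds : ∀ᶠ b in 𝓝 0, ∀ a, β a b = 1 :=
    (continuous_subtype_val.tendsto (0 : B)).eventually
      (eventually_forall_mul_eq_one hψ (isCompact_closedBall 0 r)) |>.mono
      fun b hb a => hb a a.2
  obtain ⟨a, ha⟩ := exists_eq_of_annihilator_le_ker β
    (hψ.continuous.comp (by fun_prop : Continuous fun p : A × B => (p.1 : K) * p.2)) hann_nhds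
    (χ := χ.compAddMonoidHom B.subtype) (hχ.comp continuous_subtype_val)
    fun b hb => hann b fun a ha => hb ⟨a, ha⟩
  exact ⟨a, a.2, fun b hb => DFunLike.congr_fun ha (⟨b, hb⟩ : B)⟩

theorem exists_mulShift_eq {ψ χ : AddChar K ℂ} (hψ : IsLocallyConstant ψ) (hψ_ne : ψ ≠ 1)
    (hχ : IsLocallyConstant χ) : ∃ a, ψ.mulShift a = χ := by
  obtain ⟨r, hr, hann⟩ := exists_forall_mul_eq_one_imp hψ_ne hχ
  have hclosed (b : K) : IsClosed {a | ψ (a * b) = χ b} :=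
    isClosed_eq (hψ.continuous.comp (by fun_prop)) continuous_const
  obtain ⟨a, -, ha⟩ := (isCompact_closedBall (0 : K) r).inter_iInter_nonempty _ hclosed
    fun s => by
      obtain ⟨R, hR, hs⟩ := (s.finite_toSet.isBounded).exists_pos_norm_le
      obtain ⟨a, ha, hEq⟩ := exists_mulShift_eqOn_closedBall hψ hχ.continuous hr hR hann
      exact ⟨a, ha, Set.mem_iInter₂.2 fun b hb => hEq (by simpa using hs b hb)⟩
  exact ⟨a, DFunLike.ext _ _ fun b => Set.mem_iInter.1 ha b⟩

end Duality

section Whittaker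

open Aff Filter Topology

lemma exists_pos_nsmul_mem {G : Type*} [SeminormedAddCommGroup G] [IsUltrametricDist G]
    [ProperSpace G] (x : G) {U : Set G} (hU : U ∈ 𝓝 0) : ∃ n : ℕ, 0 < n ∧ n • x ∈ U := by
  have hmem (n : ℕ) : n • x ∈ Metric.closedBall 0 ‖x‖ := by
    simpa using IsUltrametricDist.norm_nsmul_le x n
  obtain ⟨y, -, φ, hφ, hlim⟩ := (isCompact_closedBall (0 : G) ‖x‖).tendsto_subseq hmem
  have hdiff : Tendsto (fun n => φ (n + 1) • x - φ n • x) atTop (𝓝 0) := by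
    simpa using ((tendsto_add_atTop_iff_nat 1).2 hlim).sub hlim
  obtain ⟨n, hn⟩ := (hdiff.eventually hU).exists
  have hlt : φ n < φ (n + 1) := hφ n.lt_succ_self
  exact ⟨φ (n + 1) - φ n, Nat.sub_pos_of_lt hlt, by rwa [sub_nsmul _ hlt.le, ← sub_eq_add_neg]⟩

section Algebra

variable {K V : Type*} [Field K] [AddCommGroup V] [Module ℂ V] {ρ : Rep K V} {ψ : AddChar K ℂ}
  {lam : Module.Dual ℂ V}

lemma rho_sS_add (ρ : Rep K V) (b c : K) : ρ (sS (b + c)) = ρ (sS b) * ρ (sS c) := by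
  rw [← map_mul]
  congr 1
  ext <;> simp

lemma rho_sS_zero (ρ : Rep K V) : ρ (sS 0) = 1 := ρ.map_one

lemma rho_sS_pow (ρ : Rep K V) (b : K) (n : ℕ) : ρ (sS b) ^ n = ρ (sS (n • b)) := by
  induction n with
  | zero => simp [rho_sS_zero]
  | succ n ih => rw [pow_succ, ih, succ_nsmul, rho_sS_add]

/-- A `ψ`-Whittaker functional on a `TS`-module: a linear functional on which `S` acts through the
character `ψ`, that is, one that factors through the twisted coinvariants `V_{S,ψ}`. -/
def IsWhittaker (ρ : Rep K V) (ψ : AddChar K ℂ) (lam : Module.Dual ℂ V) : Prop :=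
  ∀ b v, lam (ρ (sS b) v) = ψ b * lam v

lemma IsWhittaker.sTwistKer_le_ker (h : IsWhittaker ρ ψ lam) :
    sTwistKer ρ ψ ≤ LinearMap.ker lam := by
  refine Submodule.span_le.2 ?_
  rintro _ ⟨b, v, rfl⟩
  simp [h b v]

lemma sTwistKer_one (ρ : Rep K V) : sTwistKer ρ 1 = sCoinvKer ρ := by
  simp [sTwistKer, sCoinvKer]

lemma IsWhittaker.comp_xT (h : IsWhittaker ρ ψ lam) (u : Kˣ) :
    IsWhittaker ρ (ψ.mulShift u) (lam ∘ₗ ρ (xT u)) := fun b v => by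
  have hcomm : ρ (xT u) (ρ (sS b) v) = ρ (sS (u * b)) (ρ (xT u) v) := by
    simp only [← Module.End.mul_apply, ← map_mul, mul_sS, xT_t]
  simp [hcomm, h _ _]

end Algebra

/-- Smoothness of a `TS`-module under the subgroup `S` alone. -/
def IsSmoothS {K V : Type*} [Field K] [TopologicalSpace K] [AddCommGroup V] [Module ℂ V]
    (ρ : Rep K V) : Prop :=
  ∀ v, ∀ᶠ b in 𝓝 0, ρ (sS b) v = v

lemma IsSmoothRep.isSmoothS {K V : Type*} [Field K] [TopologicalSpace K] [AddCommGroup V]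
    [Module ℂ V] {ρ : Rep K V} (hρ : IsSmoothRep ρ) : IsSmoothS ρ := fun v => by
  have hcont : Continuous (sS : K → Aff K) :=
    continuous_induced_rng.2 (by fun_prop : Continuous fun b : K => ((1 : Kˣ), b))
  exact ((hρ v).preimage hcont).mem_nhds (by simp [rho_sS_zero])

variable {K V : Type*} [NormedField K] [IsUltrametricDist K] [ProperSpace K]
  [AddCommGroup V] [Module ℂ V]

lemma IsSmoothS.iSup_eigenspace_eq_top {ρ : Rep K V} (hρ : IsSmoothS ρ) (b : K) :
    ⨆ μ, Module.End.eigenspace (ρ (sS b)) μ = ⊤ :=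
  iSup_eigenspace_eq_top_of_forall_exists_pow_apply_eq _ fun v => by
    obtain ⟨n, hn, hv⟩ := exists_pos_nsmul_mem b (hρ v)
    exact ⟨n, hn, by simpa [rho_sS_pow] using hv⟩

lemma exists_isLocallyConstant_isWhittaker {ρ : Rep K V} (hρ : IsSmoothS ρ) {N : Submodule ℂ V}
    (hN : ∀ b, N ∈ Module.End.invtSubmodule (ρ (sS b))) (hN_top : N ≠ ⊤) :
    ∃ (χ : AddChar K ℂ) (lam : Module.Dual ℂ V), IsLocallyConstant χ ∧
      lam ≠ 0 ∧ N ≤ LinearMap.ker lam ∧ IsWhittaker ρ χ lam := by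
  have hcomm (b c : K) : Commute (ρ (sS b)) (ρ (sS c)) := by
    rw [Commute, SemiconjBy, ← rho_sS_add, add_comm, rho_sS_add]
  obtain ⟨lam, χ, hlam, hN_ker, hχ⟩ :=
    exists_common_eigenfunctional _ hcomm hρ.iSup_eigenspace_eq_top hN hN_top
  obtain ⟨v, hv⟩ : ∃ v, lam v ≠ 0 := by simpa [LinearMap.ext_iff] using hlam
  have hχ_add (b c : K) : χ (b + c) = χ b * χ c :=
    mul_right_cancel₀ hv (by rw [← hχ, rho_sS_add, Module.End.mul_apply, hχ, hχ, mul_assoc])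
  have hχ_zero : χ 0 = 1 :=
    mul_right_cancel₀ hv (by rw [← hχ, rho_sS_zero, Module.End.one_apply, one_mul])
  have hχ_nhds : ∀ᶠ b in 𝓝 0, χ b = 1 := (hρ v).mono fun b hb =>
    mul_right_cancel₀ hv (by rw [← hχ, hb, one_mul])
  refine ⟨⟨χ, hχ_zero, hχ_add⟩, lam, ?_, hlam, hN_ker, hχ⟩
  refine IsLocallyConstant.iff_eventually_eq _ |>.2 fun b => ?_
  have hlim : Tendsto (· - b) (𝓝 b) (𝓝 0) := Continuous.tendsto' (by fun_prop) _ _ (sub_self b)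
  filter_upwards [hlim.eventually hχ_nhds] with c hc
  simpa [hc] using hχ_add (c - b) b

theorem exists_isWhittaker_mulShift {ψ : AddChar K ℂ} (hψ : IsLocallyConstant ψ) (hψ_ne : ψ ≠ 1)
    {ρ : Rep K V} (hρ : IsSmoothS ρ) {N : Submodule ℂ V}
    (hN : ∀ b, N ∈ Module.End.invtSubmodule (ρ (sS b))) (hN_top : N ≠ ⊤) :
    ∃ (a : K) (lam : Module.Dual ℂ V),
      lam ≠ 0 ∧ N ≤ LinearMap.ker lam ∧ IsWhittaker ρ (ψ.mulShift a) lam := by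
  obtain ⟨χ, lam, hχ, hlam, hN_ker, hwhit⟩ := exists_isLocallyConstant_isWhittaker hρ hN hN_top
  obtain ⟨a, rfl⟩ := exists_mulShift_eq hψ hψ_ne hχ
  exact ⟨a, lam, hlam, hN_ker, hwhit⟩

theorem exists_isWhittaker_of_sCoinvKer_eq_top {ψ : AddChar K ℂ} (hψ : IsLocallyConstant ψ)
    (hψ_ne : ψ ≠ 1) [Nontrivial V] {ρ : Rep K V} (hρ : IsSmoothS ρ) (hcoinv : sCoinvKer ρ = ⊤) :
    ∃ lam : Module.Dual ℂ V, lam ≠ 0 ∧ IsWhittaker ρ ψ lam := by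
  obtain ⟨a, lam, hlam, -, hwhit⟩ :=
    exists_isWhittaker_mulShift hψ hψ_ne hρ (N := ⊥) (by simp) bot_ne_top
  have ha : a ≠ 0 := by
    rintro rfl
    rw [AddChar.mulShift_zero] at hwhit
    have htop := hwhit.sTwistKer_le_ker
    rw [sTwistKer_one, hcoinv] at htop
    exact hlam (LinearMap.ker_eq_top.1 (top_le_iff.1 htop))
  let u : Kˣ := Units.mk0 a ha
  refine ⟨lam ∘ₗ ρ (xT u⁻¹), fun hzero => hlam ?_, ?_⟩
  · ext v
    have hinv : (xT u⁻¹ * xT u : Aff K) = 1 := by ext <;> simp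
    simpa [← Module.End.mul_apply, ← map_mul, hinv] using LinearMap.congr_fun hzero (ρ (xT u) v)
  · simpa [AddChar.mulShift_mulShift, u, ha] using hwhit.comp_xT u⁻¹

end Whittaker

section Kirillov

open Aff Filter Topology

variable {K V : Type*}

section Algebra

variable [Field K] [AddCommGroup V] [Module ℂ V] {ρ : Rep K V} {ψ : AddChar K ℂ}
  {lam : Module.Dual ℂ V}

/-- The map of a `TS`-module into the functions on `k^×` attached to a linear functional `lam`: the
vector `v` goes to the function `u ↦ lam (x_u v)`. When `lam` is a Whittaker functional, the image
is the Kirillov model. -/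
def kirillovMap (ρ : Rep K V) (lam : Module.Dual ℂ V) : V →ₗ[ℂ] Kˣ → ℂ :=
  LinearMap.pi fun x => lam ∘ₗ ρ (xT x)

@[simp] lemma kirillovMap_apply (ρ : Rep K V) (lam : Module.Dual ℂ V) (v : V) (x : Kˣ) :
    kirillovMap ρ lam v x = lam (ρ (xT x) v) := rfl

lemma kirillovMap_rho_apply (h : IsWhittaker ρ ψ lam) (g : Aff K) (v : V) (x : Kˣ) :
    kirillovMap ρ lam (ρ g v) x = ψ (g.s * x) * kirillovMap ρ lam v (x * g.t) := by
  have hdecomp : xT x * g = sS (g.s * x) * xT (x * g.t) := by ext <;> simp [mul_comm]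
  rw [kirillovMap_apply, kirillovMap_apply, ← Module.End.mul_apply, ← map_mul,
    hdecomp, map_mul, Module.End.mul_apply, h]

lemma kirillovMap_rho_sS (h : IsWhittaker ρ ψ lam) (b : K) (v : V) (x : Kˣ) :
    kirillovMap ρ lam (ρ (sS b) v) x = ψ (b * x) * kirillovMap ρ lam v x := by
  simp [kirillovMap_rho_apply h, -kirillovMap_apply]

lemma kirillovMap_ne_zero (hlam : lam ≠ 0) : kirillovMap ρ lam ≠ 0 := fun h => hlam <| by
  ext v
  have hone : (xT 1 : Aff K) = 1 := rfl
  simpa [hone] using congr_fun (LinearMap.congr_fun h v) 1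

end Algebra

section Topology

variable [Field K] [TopologicalSpace K] [ContinuousMul K] [AddCommGroup V] [Module ℂ V]
  {ρ : Rep K V} {ψ : AddChar K ℂ} {lam : Module.Dual ℂ V}

lemma isLocallyConstant_kirillovMap (hρ : IsSmoothRep ρ) (lam : Module.Dual ℂ V) (v : V) :
    IsLocallyConstant (kirillovMap ρ lam v) := by
  refine (IsLocallyConstant.iff_eventually_eq _).2 fun x => ?_
  have hcont : Continuous fun y : Kˣ => (xT (x⁻¹ * y) : Aff K) :=
    continuous_induced_rng.2 (by fun_prop : Continuous fun y : Kˣ => (x⁻¹ * y, (0 : K)))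
  have hone : (xT 1 : Aff K) = 1 := rfl
  filter_upwards [((hρ v).preimage hcont).mem_nhds (by simp [hone])] with y hy
  have hdecomp : (xT y : Aff K) = xT x * xT (x⁻¹ * y) := by ext <;> simp
  rw [kirillovMap_apply, hdecomp, map_mul, Module.End.mul_apply, hy, kirillovMap_apply]

lemma kirillovMap_eventually_eq_zero_nhds_zero (hψ : IsLocallyConstant ψ)
    (h : IsWhittaker ρ ψ lam) {v : V} (hv : v ∈ sCoinvKer ρ) :
    ∀ᶠ x in comap Units.val (𝓝 0), kirillovMap ρ lam v x = 0 := by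
  induction hv using Submodule.span_induction with
  | mem w hw =>
    obtain ⟨b, v, rfl⟩ := hw
    have hψ_one := eventually_forall_mul_eq_one hψ (isCompact_singleton (x := b))
    filter_upwards [tendsto_comap.eventually hψ_one] with x hx
    rw [map_sub, Pi.sub_apply, kirillovMap_rho_sS h, hx b rfl, one_mul, sub_self]
  | zero => simp
  | add v w _ _ hv hw => filter_upwards [hv, hw] with x hvx hwx; simp_all
  | smul c v _ hv => filter_upwards [hv] with x hvx; simp_all

end Topology

lemma cocompact_units_le [NormedField K] [ProperSpace K] :
    cocompact Kˣ ≤ comap Units.val (𝓝 (0 : K)) ⊔ comap Units.val (Bornology.cobounded K) := by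
  have hinv : Tendsto Units.val (comap (fun x : Kˣ => MulOpposite.op (x⁻¹ : Kˣ).val)
      (cocompact Kᵐᵒᵖ)) (𝓝 (0 : K)) := by
    have hop : Tendsto MulOpposite.unop (cocompact Kᵐᵒᵖ) (Bornology.cobounded K) := by
      rw [Metric.cobounded_eq_cocompact]
      exact MulOpposite.opHomeomorph.symm.isClosedEmbedding.tendsto_cocompact
    exact ((tendsto_inv₀_cobounded.comp hop).comp tendsto_comap).congr fun x => by simp
  refine Units.isClosedEmbedding_embedProduct.tendsto_cocompact.le_comap.trans ?_
  rw [← coprod_cocompact, Filter.coprod, comap_sup, comap_comap, comap_comap, sup_comm,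
    Metric.cobounded_eq_cocompact]
  exact sup_le_sup_right hinv.le_comap _

/- For `x` large, `v` is fixed by `s_b` with `b = y / x`, which multiplies the value of its image at
`x` by `ψ y ≠ 1`. -/
lemma kirillovMap_eventually_eq_zero_cobounded [NormedField K] [AddCommGroup V] [Module ℂ V]
    {ρ : Rep K V} {ψ : AddChar K ℂ} {lam : Module.Dual ℂ V} (hψ_ne : ψ ≠ 1) (hρ : IsSmoothS ρ)
    (h : IsWhittaker ρ ψ lam) (v : V) :
    ∀ᶠ x in comap Units.val (Bornology.cobounded K), kirillovMap ρ lam v x = 0 := by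
  obtain ⟨y, hy⟩ := AddChar.ne_one_iff.1 hψ_ne
  have hlim : Tendsto (fun x : K => y * x⁻¹) (Bornology.cobounded K) (𝓝 0) := by
    simpa using (tendsto_inv₀_cobounded (α := K)).const_mul y
  filter_upwards [tendsto_comap.eventually (hlim.eventually (hρ v))] with x hx
  have hmul := kirillovMap_rho_sS h (y * (x : K)⁻¹) v x
  rw [hx, inv_mul_cancel_right₀ x.ne_zero] at hmul
  exact (mul_left_eq_self₀.1 hmul.symm).resolve_left hy

lemma kirillovMap_mem_SSx [NontriviallyNormedField K] [ProperSpace K] [AddCommGroup V]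
    [Module ℂ V] {ρ : Rep K V} {ψ : AddChar K ℂ} {lam : Module.Dual ℂ V}
    (hψ : IsLocallyConstant ψ) (hψ_ne : ψ ≠ 1) (hρ : IsSmoothRep ρ)
    (hlam : IsWhittaker ρ ψ lam) {v : V} (hv : v ∈ sCoinvKer ρ) : kirillovMap ρ lam v ∈ SSx K := by
  refine ⟨isLocallyConstant_kirillovMap hρ lam v, ?_⟩
  rw [hasCompactSupport_iff_eventuallyEq, coclosedCompact_eq_cocompact]
  exact cocompact_units_le <| mem_sup.2
    ⟨kirillovMap_eventually_eq_zero_nhds_zero hψ hlam hv,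
      kirillovMap_eventually_eq_zero_cobounded hψ_ne hρ.isSmoothS hlam v⟩

end Kirillov

section Irreducibility

open Aff Filter Topology

lemma iso_of_equivariant_ne_zero {G V W : Type*} [Monoid G] [AddCommGroup V] [Module ℂ V]
    [AddCommGroup W] [Module ℂ W] {ρ : Representation ℂ G V} {σ : Representation ℂ G W}
    (hρ : ∀ U, GRep.Invariant ρ U → U = ⊥ ∨ U = ⊤) (hσ : ∀ U, GRep.Invariant σ U → U = ⊥ ∨ U = ⊤)
    {f : V →ₗ[ℂ] W} (hf : GRep.Equivariant ρ σ f) (hf_ne : f ≠ 0) : GRep.Iso ρ σ := by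
  have hker : LinearMap.ker f = ⊥ :=
    (hρ _ (GRep.ker_invariant ρ σ f hf)).resolve_right (mt LinearMap.ker_eq_top.1 hf_ne)
  have hrange : LinearMap.range f = ⊤ :=
    (hσ _ (GRep.range_invariant ρ σ f hf)).resolve_left (mt LinearMap.range_eq_bot.1 hf_ne)
  exact ⟨.ofBijective f ⟨LinearMap.ker_eq_bot.1 hker, LinearMap.range_eq_top.1 hrange⟩, hf⟩

lemma sCoinvKer_eq_top_of_irred {K V : Type*} [Field K] [AddCommGroup V] [Module ℂ V]
    {ρ : Rep K V} (hirr : GRep.Irred ρ) (hS : sInv ρ ≠ ⊤) : sCoinvKer ρ = ⊤ := by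
  refine (hirr.2 _ (sCoinvKer_invariant ρ)).resolve_left fun hbot => hS ?_
  refine eq_top_iff.2 fun v _ b => sub_eq_zero.1 ?_
  rw [← Submodule.mem_bot ℂ, ← hbot]
  exact Submodule.subset_span ⟨b, v, rfl⟩

variable {K : Type*} [NontriviallyNormedField K] {ψ : AddChar K ℂ} (hψ : IsLocallyConstant ψ)

lemma SRep_apply (g : Aff K) (f : SSx K) (x : Kˣ) :
    (SRep ψ hψ g f : Kˣ → ℂ) x = ψ (g.s * x) * (f : Kˣ → ℂ) (x * g.t) := rfl

lemma isSmoothS_SRep : IsSmoothS (SRep ψ hψ) := fun f => by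
  filter_upwards [eventually_forall_mul_eq_one hψ (f.2.2.image Units.continuous_val)] with b hb
  ext x
  by_cases hx : (f : Kˣ → ℂ) x = 0
  · simp [SRep_apply, hx]
  · have hψ_one : ψ (b * x) = 1 := mul_comm b (x : K) ▸
      hb x (Set.mem_image_of_mem _ (subset_tsupport _ hx))
    simp [SRep_apply, hψ_one]

lemma mem_sTwistKer_of_finset (χ : AddChar K ℂ) (s : Finset K) (f : SSx K)
    (hf : ∀ x : Kˣ, (f : Kˣ → ℂ) x ≠ 0 → ∃ b ∈ s, ψ (b * x) ≠ χ b) :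
    f ∈ sTwistKer (SRep ψ hψ) χ := by
  induction s using Finset.induction_on generalizing f with
  | empty =>
    have hzero : f = 0 := by
      ext x
      simpa using hf x
    exact hzero ▸ zero_mem _
  | insert b s _ ih =>
    let c (x : Kˣ) : ℂ := ψ (b * x) - χ b
    have hc : IsLocallyConstant c :=
      (hψ.comp_continuous (by fun_prop)).sub (IsLocallyConstant.const (χ b))
    -- Since `0⁻¹ = 0`, the function `f * c⁻¹ * c` is `f` where `c ≠ 0`, and `0` elsewhere.
    let k : SSx K := ⟨f * c⁻¹, f.2.1.mul hc.inv, f.2.2.mul_right⟩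
    let g : SSx K := SRep ψ hψ (sS b) k - χ b • k
    have hg_mem : g ∈ sTwistKer (SRep ψ hψ) χ := Submodule.subset_span ⟨b, k, rfl⟩
    have hg (x : Kˣ) : (g : Kˣ → ℂ) x = (f : Kˣ → ℂ) x * (c x)⁻¹ * c x := by
      simp only [AddSubgroupClass.coe_sub, SetLike.val_smul, Pi.sub_apply, SRep_apply, sS_s, sS_t,
        mul_one, Pi.mul_apply, Pi.inv_apply, Pi.smul_apply, smul_eq_mul, g, k, c]
      ring
    have hrest : f - g ∈ sTwistKer (SRep ψ hψ) χ := ih _ fun x hx => by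
      have hx' : (f : Kˣ → ℂ) x - (f : Kˣ → ℂ) x * (c x)⁻¹ * c x ≠ 0 := hg x ▸ hx
      have hcx : c x = 0 := by
        by_contra hne
        exact hx' (by rw [inv_mul_cancel_right₀ hne, sub_self])
      have hfx : (f : Kˣ → ℂ) x ≠ 0 := by simpa [hcx] using hx'
      obtain ⟨b', hb', hne⟩ := hf x hfx
      refine ⟨b', (Finset.mem_insert.1 hb').resolve_left ?_, hne⟩
      rintro rfl
      exact hne (sub_eq_zero.1 hcx)
    simpa using add_mem hrest hg_mem

lemma mem_sTwistKer_mulShift_of_apply_eq_zero (hψ_ne : ψ ≠ 1) (a : K) (f : SSx K)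
    (hf : ∀ x : Kˣ, (x : K) = a → (f : Kˣ → ℂ) x = 0) :
    f ∈ sTwistKer (SRep ψ hψ) (ψ.mulShift a) := by
  obtain ⟨y, hy⟩ := AddChar.ne_one_iff.1 hψ_ne
  have hsupp : tsupport (f : Kˣ → ℂ) = Function.support (f : Kˣ → ℂ) :=
    (f.2.1.isOpen_fiber 0).isClosed_compl.closure_eq
  have hopen (b : K) : IsOpen {x : Kˣ | ψ (b * x) ≠ ψ (a * b)} :=
    (hψ.comp_continuous (by fun_prop : Continuous fun x : Kˣ => b * (x : K))).isClosed_fiber _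
      |>.isOpen_compl
  have hcover : tsupport (f : Kˣ → ℂ) ⊆ ⋃ b, {x : Kˣ | ψ (b * x) ≠ ψ (a * b)} := fun x hx => by
    rw [hsupp] at hx
    have hne : (x : K) - a ≠ 0 := sub_ne_zero.2 fun h => hx (hf x h)
    refine Set.mem_iUnion.2 ⟨y / (x - a), fun h => hy ?_⟩
    have hsplit : y = y / (x - a) * x - a * (y / (x - a)) := by field_simp
    rw [hsplit, AddChar.map_sub_eq_div, h, div_self (ψ.val_isUnit _).ne_zero]
  obtain ⟨s, hs⟩ := f.2.2.elim_finite_subcover _ hopen hcover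
  exact mem_sTwistKer_of_finset hψ _ s f fun x hx => by
    simpa using hs (subset_tsupport _ hx)

variable [IsUltrametricDist K] [ProperSpace K]

theorem eq_bot_or_eq_top_of_invariant_SRep (hψ_ne : ψ ≠ 1) (U : Submodule ℂ (SSx K))
    (hU : GRep.Invariant (SRep ψ hψ) U) : U = ⊥ ∨ U = ⊤ := by
  refine or_iff_not_imp_right.2 fun hU_top => (Submodule.eq_bot_iff U).2 fun f hf => ?_
  obtain ⟨a, lam, hlam, hU_ker, hwhit⟩ := exists_isWhittaker_mulShift hψ hψ_ne
    (isSmoothS_SRep hψ) (fun b f hf => hU (sS b) f hf) hU_top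
  have hlam_zero (g : SSx K) (hg : ∀ x : Kˣ, (x : K) = a → (g : Kˣ → ℂ) x = 0) : lam g = 0 :=
    hwhit.sTwistKer_le_ker (mem_sTwistKer_mulShift_of_apply_eq_zero hψ hψ_ne a g hg)
  obtain ⟨u, rfl⟩ : IsUnit a := isUnit_iff_ne_zero.2 fun ha =>
    hlam (LinearMap.ext fun g => hlam_zero g fun x hx => absurd (hx.trans ha) x.ne_zero)
  ext x
  by_contra hfx
  let h : SSx K := SRep ψ hψ (xT (u⁻¹ * x)) f
  have hh : (h : Kˣ → ℂ) u = (f : Kˣ → ℂ) x := by simp [h, SRep_apply]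
  have hlam_h : lam h = 0 := hU_ker (hU _ f hf)
  refine hlam (LinearMap.ext fun g => ?_)
  have := hlam_zero (g - ((g : Kˣ → ℂ) u / (f : Kˣ → ℂ) x) • h) fun y hy => by
    obtain rfl := Units.ext hy
    simp [hh, div_mul_cancel₀ _ hfx]
  simpa [hlam_h] using this

end Irreducibility

section Statements

open Aff

variable {K : Type*} [NontriviallyNormedField K] [IsUltrametricDist K] [ProperSpace K]

theorem statement4_general
    (ψ : AddChar K ℂ) (hψlc : IsLocallyConstant (⇑ψ)) (hψne : ψ ≠ 1)
    {V : Type*} [AddCommGroup V] [Module ℂ V]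
    (ρ : Rep K V) (hρ : IsSmoothRep ρ) (hirr : GRep.Irred ρ) (hS : sInv ρ ≠ ⊤) :
    GRep.Iso ρ (SRep ψ hψlc) := by
  have := hirr.1
  have hcoinv := sCoinvKer_eq_top_of_irred hirr hS
  obtain ⟨lam, hlam, hwhit⟩ :=
    exists_isWhittaker_of_sCoinvKer_eq_top hψlc hψne hρ.isSmoothS hcoinv
  let Φ : V →ₗ[ℂ] SSx K := (kirillovMap ρ lam).codRestrict (SSx K) fun v =>
    kirillovMap_mem_SSx hψlc hψne hρ hwhit (hcoinv ▸ trivial)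
  have hΦ : GRep.Equivariant ρ (SRep ψ hψlc) Φ := fun g v =>
    Subtype.ext (funext fun x => kirillovMap_rho_apply hwhit g v x)
  have hΦ_ne : Φ ≠ 0 := fun h => kirillovMap_ne_zero hlam <|
    LinearMap.ext fun v => congr_arg Subtype.val (LinearMap.congr_fun h v)
  exact iso_of_equivariant_ne_zero hirr.2 (eq_bot_or_eq_top_of_invariant_SRep hψlc hψne) hΦ hΦ_ne

theorem statement4
    (hchar : (2 : K) ≠ 0)
    (ψ : AddChar K ℂ) (hψlc : IsLocallyConstant (⇑ψ)) (hψne : ψ ≠ 1)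
    {V : Type*} [AddCommGroup V] [Module ℂ V]
    (ρ : Rep K V) (hρ : IsSmoothRep ρ) (hirr : GRep.Irred ρ) (hS : sInv ρ ≠ ⊤) :
    GRep.Iso ρ (SRep ψ hψlc) :=
  statement4_general ψ hψlc hψne ρ hρ hirr hS

end Statements

end PSW
end
end
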